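/- Let φ_λ be a minimal nonnegative classical solution of the explosion problem at parameter λ > 0, and suppose there exist κ ∈ ℝ and a function ψ, C² in Ω, continuous on the closure of Ω, positive in Ω, vanishing on ∂Ω, such that −Δψ(x) + ⟨u(x), ∇ψ(x)⟩ − λ g'(φ_λ(x)) ψ(x) = κ ψ(x) for all x ∈ Ω (i.e. ψ is a principal eigenfunction of the linearized operator with eigenvalue κ). Then κ ≥ 0. -/

import Mathlib

open Set MeasureTheory
open scoped RealInnerProductSpace

noncomputable section

/-- The Laplacian of a real-valued function on Euclidean space, computed as the sum of
the second partial derivatives in the coordinate directions. -/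
def lapl {n : ℕ} (φ : EuclideanSpace ℝ (Fin n) → ℝ) (x : EuclideanSpace ℝ (Fin n)) : ℝ :=
  ∑ i : Fin n, fderiv ℝ (fun y => fderiv ℝ φ y (EuclideanSpace.single i 1)) x
    (EuclideanSpace.single i 1)

/-- The divergence of a vector field on Euclidean space. -/
def dvg {n : ℕ} (u : EuclideanSpace ℝ (Fin n) → EuclideanSpace ℝ (Fin n))
    (x : EuclideanSpace ℝ (Fin n)) : ℝ :=
  ∑ i : Fin n, fderiv ℝ (fun y => u y i) x (EuclideanSpace.single i 1)

/-- A classical solution of the explosion problem `-Δφ + ⟨u, ∇φ⟩ = λ g(φ)` in `Ω`,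
vanishing on `∂Ω`: `C²` in `Ω`, continuous on the closure of `Ω`. -/
def IsClassicalSol {n : ℕ} (Ω : Set (EuclideanSpace ℝ (Fin n)))
    (u : EuclideanSpace ℝ (Fin n) → EuclideanSpace ℝ (Fin n)) (g : ℝ → ℝ) (lam : ℝ)
    (φ : EuclideanSpace ℝ (Fin n) → ℝ) : Prop :=
  (∀ x ∈ Ω, ContDiffAt ℝ 2 φ x) ∧ ContinuousOn φ (closure Ω) ∧
  (∀ x ∈ Ω, -lapl φ x + ⟪u x, gradient φ x⟫ = lam * g (φ x)) ∧
  (∀ x ∈ frontier Ω, φ x = 0)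

/-- A nonnegative classical solution. -/
def IsNonnegSol {n : ℕ} (Ω : Set (EuclideanSpace ℝ (Fin n)))
    (u : EuclideanSpace ℝ (Fin n) → EuclideanSpace ℝ (Fin n)) (g : ℝ → ℝ) (lam : ℝ)
    (φ : EuclideanSpace ℝ (Fin n) → ℝ) : Prop :=
  IsClassicalSol Ω u g lam φ ∧ ∀ x ∈ Ω, 0 ≤ φ x

/-- A minimal nonnegative classical solution: one that lies below every nonnegative
classical solution at the same parameter. -/
def IsMinimalSol {n : ℕ} (Ω : Set (EuclideanSpace ℝ (Fin n)))
    (u : EuclideanSpace ℝ (Fin n) → EuclideanSpace ℝ (Fin n)) (g : ℝ → ℝ) (lam : ℝ)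
    (φ : EuclideanSpace ℝ (Fin n) → ℝ) : Prop :=
  IsNonnegSol Ω u g lam φ ∧ ∀ v, IsNonnegSol Ω u g lam v → ∀ x ∈ Ω, φ x ≤ v x

open Filter Topology
open scoped ContDiff

abbrev Eu (n : ℕ) := EuclideanSpace ℝ (Fin n)

/-- coordinate vector -/
def ei {n : ℕ} (i : Fin n) : Eu n := EuclideanSpace.single i (1 : ℝ)

/-- partial derivative -/
def pd {n : ℕ} (i : Fin n) (f : Eu n → ℝ) (x : Eu n) : ℝ := fderiv ℝ f x (ei i)

lemma lapl_eq {n : ℕ} (f : Eu n → ℝ) (x : Eu n) : lapl f x = ∑ i, pd i (pd i f) x := rfl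

lemma vec_eq_sum {n : ℕ} (v : Eu n) : v = ∑ i, v i • ei i := by
  have := (EuclideanSpace.basisFun (Fin n) ℝ).sum_repr v
  simpa [ei] using this.symm

lemma fderiv_apply_eq {n : ℕ} (f : Eu n → ℝ) (x v : Eu n) :
    fderiv ℝ f x v = ∑ i, v i * pd i f x := by
  conv_lhs => rw [vec_eq_sum v]
  simp [pd]

lemma inner_gradient {n : ℕ} (f : Eu n → ℝ) (x v : Eu n) :
    ⟪v, gradient f x⟫ = ∑ i, v i * pd i f x := by
  rw [← fderiv_apply_eq, real_inner_comm, gradient, InnerProductSpace.toDual_symm_apply]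

lemma cont_mul_supp {n : ℕ} {Ω : Set (Eu n)} (hΩ : IsOpen Ω) {a b : Eu n → ℝ}
    (ha : ContinuousOn a Ω) (hb : Continuous b) (hs : tsupport b ⊆ Ω) :
    Continuous (fun x => a x * b x) := by
  rw [continuous_iff_continuousAt]
  intro x
  by_cases hx : x ∈ tsupport b
  · exact (ha.continuousAt (hΩ.mem_nhds (hs hx))).mul hb.continuousAt
  · have : (fun x => a x * b x) =ᶠ[𝓝 x] fun _ => 0 := by
      filter_upwards [notMem_tsupport_iff_eventuallyEq.1 hx] with y hy
      simp [hy]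
    exact continuousAt_const.congr this.symm

lemma contDiff_mul_supp {n : ℕ} {Ω : Set (Eu n)} {a b : Eu n → ℝ} {k : ℕ∞}
    (ha : ∀ x ∈ Ω, ContDiffAt ℝ k a x) (hb : ContDiff ℝ k b) (hs : tsupport b ⊆ Ω) :
    ContDiff ℝ k (fun x => a x * b x) := by
  rw [contDiff_iff_contDiffAt]
  intro x
  by_cases hx : x ∈ tsupport b
  · exact (ha x (hs hx)).mul hb.contDiffAt
  · have : (fun x => a x * b x) =ᶠ[𝓝 x] fun _ => 0 := by
      filter_upwards [notMem_tsupport_iff_eventuallyEq.1 hx] with y hy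
      simp [hy]
    exact contDiffAt_const.congr_of_eventuallyEq this

lemma li_mul {n : ℕ} {Ω : Set (Eu n)} (f b : Eu n → ℝ)
    (hf : LocallyIntegrableOn f Ω) (hb : Continuous b) (hc : HasCompactSupport b)
    (hs : tsupport b ⊆ Ω) : Integrable (fun x => f x * b x) := by
  have h1 : IntegrableOn f (tsupport b) := hf.integrableOn_compact_subset hs hc
  have h2 : IntegrableOn (fun x => f x * b x) (tsupport b) :=
    h1.mul_continuousOn hb.continuousOn hc
  rw [← integrableOn_iff_integrable_of_support_subset (s := tsupport b)]
  · exact h2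
  · intro x hx
    apply subset_tsupport
    simp only [Function.mem_support] at hx ⊢
    intro h; simp [h] at hx

lemma tsupport_mul_sub {n : ℕ} (a b : Eu n → ℝ) :
    tsupport (fun x => a x * b x) ⊆ tsupport b := by
  apply closure_mono
  intro x hx
  simp only [Function.mem_support] at hx ⊢
  intro h; simp [h] at hx

lemma pd_cont {n : ℕ} {f : Eu n → ℝ} (hf : ContDiff ℝ 1 f) (i : Fin n) : Continuous (pd i f) :=
  (hf.continuous_fderiv (by norm_num)).clm_apply continuous_const

lemma pd_contDiffAt {n : ℕ} {f : Eu n → ℝ} {x : Eu n} {k m : ℕ∞} (hf : ContDiffAt ℝ k f x)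
    (h : m + 1 ≤ k) (i : Fin n) : ContDiffAt ℝ m (pd i f) x :=
  (hf.fderiv_right (m := m) (by exact_mod_cast h)).clm_apply contDiffAt_const

lemma pd_contDiff {n : ℕ} {f : Eu n → ℝ} {k m : ℕ∞} (hf : ContDiff ℝ k f)
    (h : m + 1 ≤ k) (i : Fin n) : ContDiff ℝ m (pd i f) :=
  (hf.fderiv_right (m := m) (by exact_mod_cast h)).clm_apply contDiff_const

lemma pd_tsupport {n : ℕ} (f : Eu n → ℝ) (i : Fin n) : tsupport (pd i f) ⊆ tsupport f := by
  refine (closure_mono ?_).trans (tsupport_fderiv_subset ℝ (f := f))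
  intro x hx
  simp only [Function.mem_support] at hx ⊢
  intro h; simp [pd, h] at hx

lemma pd_compact {n : ℕ} {f : Eu n → ℝ} (hf : HasCompactSupport f) (i : Fin n) :
    HasCompactSupport (pd i f) :=
  hf.mono' ((subset_tsupport _).trans (pd_tsupport f i))

lemma ibp {n : ℕ} {Ω : Set (Eu n)} (hΩ : IsOpen Ω) {a b : Eu n → ℝ}
    (ha : ∀ x ∈ Ω, ContDiffAt ℝ 1 a x) (hb : ContDiff ℝ 1 b) (hc : HasCompactSupport b)
    (hs : tsupport b ⊆ Ω) (i : Fin n) :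
    ∫ x, a x * pd i b x = - ∫ x, pd i a x * b x := by
  have hac : ContinuousOn a Ω := fun x hx => (ha x hx).continuousAt.continuousWithinAt
  have hpc : ContinuousOn (pd i a) Ω := fun x hx =>
    (pd_contDiffAt (k := 1) (m := 0) (ha x hx) (by norm_num) i).continuousAt.continuousWithinAt
  apply integral_mul_fderiv_eq_neg_fderiv_mul_of_integrable
  · exact li_mul _ _ (hpc.locallyIntegrableOn hΩ.measurableSet) hb.continuous hc hs
  · exact li_mul _ _ (hac.locallyIntegrableOn hΩ.measurableSet) (pd_cont hb i) (pd_compact hc i)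
      ((pd_tsupport b i).trans hs)
  · exact li_mul _ _ (hac.locallyIntegrableOn hΩ.measurableSet) hb.continuous hc hs
  · intro x hx; exact (ha x (hs hx)).differentiableAt (by norm_num)
  · intro x hx; exact hb.contDiffAt.differentiableAt (by norm_num)

/-- test functions -/
structure Tst {n : ℕ} (Ω : Set (Eu n)) (ζ : Eu n → ℝ) : Prop where
  cd : ContDiff ℝ 2 ζ
  cs : HasCompactSupport ζ
  ts : tsupport ζ ⊆ Ω

/-- formal adjoint of `-Δ + u·∇` -/
def adj {n : ℕ} (u : Eu n → Eu n) (ζ : Eu n → ℝ) (x : Eu n) : ℝ :=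
  - lapl ζ x - (dvg u x * ζ x + ∑ i, u x i * pd i ζ x)

/-- weak solutions of `-Δv + u·∇v = f` -/
def Wk {n : ℕ} (Ω : Set (Eu n)) (u : Eu n → Eu n) (v f : Eu n → ℝ) : Prop :=
  ∀ ζ, Tst Ω ζ → ∫ x, v x * adj u ζ x = ∫ x, f x * ζ x

lemma dvg_eq {n : ℕ} (u : Eu n → Eu n) (x : Eu n) : dvg u x = ∑ i, pd i (fun y => u y i) x := rfl

section
variable {n : ℕ} {Ω : Set (Eu n)} {u : Eu n → Eu n}

lemma comp_contDiffAt {x : Eu n} (hu : ContDiffAt ℝ 1 u x) (i : Fin n) :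
    ContDiffAt ℝ 1 (fun y => u y i) x :=
  (EuclideanSpace.proj (𝕜 := ℝ) i).contDiff.contDiffAt.comp x hu

lemma comp_contOn (hu : ∀ x ∈ Ω, ContDiffAt ℝ 1 u x) (i : Fin n) :
    ContinuousOn (fun y => u y i) Ω := fun x hx =>
  (comp_contDiffAt (hu x hx) i).continuousAt.continuousWithinAt

lemma dvg_contOn (hu : ∀ x ∈ Ω, ContDiffAt ℝ 1 u x) : ContinuousOn (dvg u) Ω := by
  have : dvg u = fun x => ∑ i, pd i (fun y => u y i) x := by ext; rfl
  rw [this]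
  refine continuousOn_finsetSum _ fun i _ => fun x hx => ?_
  exact (pd_contDiffAt (k := 1) (m := 0) (comp_contDiffAt (hu x hx) i)
    (by norm_num) i).continuousAt.continuousWithinAt

lemma Tst.pd_cd {ζ : Eu n → ℝ} (h : Tst Ω ζ) (i : Fin n) : ContDiff ℝ 1 (pd i ζ) :=
  pd_contDiff (k := 2) (m := 1) h.cd (by norm_num) i

lemma lapl_supp {ζ : Eu n → ℝ} : tsupport (lapl ζ) ⊆ tsupport ζ := by
  apply closure_minimal _ (isClosed_tsupport ζ)
  intro x hx
  by_contra h
  apply hx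
  rw [lapl_eq]
  refine Finset.sum_eq_zero fun i _ => ?_
  exact image_eq_zero_of_notMem_tsupport
    (fun h' => h (pd_tsupport _ i (pd_tsupport _ i h')))

lemma lapl_cont {ζ : Eu n → ℝ} (h : ContDiff ℝ 2 ζ) : Continuous (lapl ζ) := by
  have : lapl ζ = fun x => ∑ i, pd i (pd i ζ) x := by ext; rfl
  rw [this]
  exact continuous_finsetSum _ fun i _ => pd_cont (pd_contDiff (k := 2) (m := 1) h (by norm_num) i) i

lemma adj_supp {ζ : Eu n → ℝ} : tsupport (adj u ζ) ⊆ tsupport ζ := by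
  apply closure_minimal _ (isClosed_tsupport ζ)
  intro x hx
  by_contra h
  apply hx
  have h1 : lapl ζ x = 0 := image_eq_zero_of_notMem_tsupport (fun h' => h (lapl_supp h'))
  have h2 : ζ x = 0 := image_eq_zero_of_notMem_tsupport h
  have h3 : ∀ i, pd i ζ x = 0 := fun i =>
    image_eq_zero_of_notMem_tsupport (fun h' => h (pd_tsupport _ i h'))
  simp [adj, h1, h2, h3]

lemma adj_cont (hΩ : IsOpen Ω) (hu : ∀ x ∈ Ω, ContDiffAt ℝ 1 u x) {ζ : Eu n → ℝ} (h : Tst Ω ζ) :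
    Continuous (adj u ζ) := by
  unfold adj
  refine (lapl_cont h.cd).neg.sub ((cont_mul_supp hΩ (dvg_contOn hu) h.cd.continuous h.ts).add ?_)
  exact continuous_finsetSum _ fun i _ => cont_mul_supp hΩ (comp_contOn hu i)
    (h.pd_cd i).continuous ((pd_tsupport ζ i).trans h.ts)

lemma adj_cs {ζ : Eu n → ℝ} (h : Tst Ω ζ) : HasCompactSupport (adj u ζ) :=
  h.cs.mono' ((subset_tsupport _).trans adj_supp)

/-- drift part of the adjoint as a divergence -/
lemma drift_eq (hu : ∀ x ∈ Ω, ContDiffAt ℝ 1 u x) {ζ : Eu n → ℝ} (h : Tst Ω ζ) (x : Eu n) :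
    dvg u x * ζ x + ∑ i, u x i * pd i ζ x = ∑ i, pd i (fun y => u y i * ζ y) x := by
  by_cases hx : x ∈ Ω
  · rw [dvg_eq, Finset.sum_mul, ← Finset.sum_add_distrib]
    refine Finset.sum_congr rfl fun i _ => ?_
    have h1 := (comp_contDiffAt (hu x hx) i).differentiableAt (by norm_num)
    have h2 : DifferentiableAt ℝ ζ x := h.cd.contDiffAt.differentiableAt (by norm_num)
    have := fderiv_fun_mul h1 h2
    simp only [pd, this]
    simp; ring
  · have hx' : x ∉ tsupport ζ := fun h' => hx (h.ts h')
    have h2 : ζ x = 0 := image_eq_zero_of_notMem_tsupport hx'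
    have h3 : ∀ i, pd i ζ x = 0 := fun i =>
      image_eq_zero_of_notMem_tsupport (fun h' => hx' (pd_tsupport _ i h'))
    have h4 : ∀ i, pd i (fun y => u y i * ζ y) x = 0 := fun i =>
      image_eq_zero_of_notMem_tsupport (fun h' => hx' (tsupport_mul_sub _ _ (pd_tsupport _ i h')))
    simp [h2, h3, h4]

lemma int_drift (hΩ : IsOpen Ω) (hu : ∀ x ∈ Ω, ContDiffAt ℝ 1 u x) {w : Eu n → ℝ}
    (hw : ∀ x ∈ Ω, ContDiffAt ℝ 1 w x) {ζ : Eu n → ℝ} (h : Tst Ω ζ) :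
    ∫ x, w x * (dvg u x * ζ x + ∑ i, u x i * pd i ζ x) =
      - ∫ x, (∑ i, u x i * pd i w x) * ζ x := by
  simp_rw [drift_eq hu h, Finset.mul_sum, Finset.sum_mul]
  have hwc : ContinuousOn w Ω := fun x hx => (hw x hx).continuousAt.continuousWithinAt
  have hpc : ∀ i, ContinuousOn (pd i w) Ω := fun i x hx =>
    (pd_contDiffAt (k := 1) (m := 0) (hw x hx) (by norm_num) i).continuousAt.continuousWithinAt
  have hcd : ∀ i, ContDiff ℝ 1 (fun y => u y i * ζ y) := fun i =>
    contDiff_mul_supp (k := 1) (fun x hx => comp_contDiffAt (hu x hx) i)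
      (h.cd.of_le (by norm_num)) h.ts
  have hts : ∀ i, tsupport (fun y => u y i * ζ y) ⊆ Ω := fun i =>
    (tsupport_mul_sub _ _).trans h.ts
  have hcs : ∀ i, HasCompactSupport (fun y => u y i * ζ y) := fun i => h.cs.mul_left
  rw [integral_finsetSum, integral_finsetSum, ← Finset.sum_neg_distrib]
  · refine Finset.sum_congr rfl fun i _ => ?_
    rw [ibp hΩ hw (hcd i) (hcs i) (hts i) i]
    congr 1
    refine integral_congr_ae (Eventually.of_forall fun x => ?_)
    simp only; ring
  · intro i _
    have := li_mul _ _ ((hpc i).locallyIntegrableOn hΩ.measurableSet (μ := volume))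
      (hcd i).continuous (hcs i) (hts i)
    refine this.congr (Eventually.of_forall fun x => ?_)
    simp only; ring
  · intro i _
    exact li_mul _ _ (hwc.locallyIntegrableOn hΩ.measurableSet) (pd_cont (hcd i) i)
      (pd_compact (hcs i) i) ((pd_tsupport _ i).trans (hts i))

lemma int_lapl (hΩ : IsOpen Ω) {w : Eu n → ℝ}
    (hw : ∀ x ∈ Ω, ContDiffAt ℝ 2 w x) {ζ : Eu n → ℝ} (h : Tst Ω ζ) :
    ∫ x, w x * lapl ζ x = ∫ x, lapl w x * ζ x := by
  simp_rw [lapl_eq, Finset.mul_sum, Finset.sum_mul]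
  have hw1 : ∀ x ∈ Ω, ContDiffAt ℝ 1 w x := fun x hx => (hw x hx).of_le (by norm_num)
  have hwc : ContinuousOn w Ω := fun x hx => (hw x hx).continuousAt.continuousWithinAt
  have hp1 : ∀ i, ∀ x ∈ Ω, ContDiffAt ℝ 1 (pd i w) x := fun i x hx =>
    pd_contDiffAt (k := 2) (m := 1) (hw x hx) (by norm_num) i
  have hpc : ∀ i, ContinuousOn (pd i (pd i w)) Ω := fun i x hx =>
    (pd_contDiffAt (k := 1) (m := 0) (hp1 i x hx) (by norm_num) i).continuousAt.continuousWithinAt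
  rw [integral_finsetSum, integral_finsetSum]
  · refine Finset.sum_congr rfl fun i _ => ?_
    rw [ibp hΩ hw1 (h.pd_cd i) (pd_compact h.cs i) ((pd_tsupport _ i).trans h.ts) i,
      ibp hΩ (hp1 i) (h.cd.of_le (by norm_num)) h.cs h.ts i, neg_neg]
  · intro i _
    exact li_mul _ _ ((hpc i).locallyIntegrableOn hΩ.measurableSet) h.cd.continuous h.cs h.ts
  · intro i _
    exact li_mul _ _ (hwc.locallyIntegrableOn hΩ.measurableSet) (pd_cont (h.pd_cd i) i)
      (pd_compact (pd_compact h.cs i) i) ((pd_tsupport _ i).trans ((pd_tsupport _ i).trans h.ts))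

lemma lapl_contOn (hw : ∀ x ∈ Ω, ContDiffAt ℝ 2 w x) : ContinuousOn (lapl (n := n) w) Ω := by
  have : lapl w = fun x => ∑ i, pd i (pd i w) x := by ext; rfl
  rw [this]
  refine continuousOn_finsetSum _ fun i _ x hx => ?_
  exact (pd_contDiffAt (k := 1) (m := 0) (pd_contDiffAt (k := 2) (m := 1) (hw x hx)
    (by norm_num) i) (by norm_num) i).continuousAt.continuousWithinAt

lemma grad_contOn (hu : ∀ x ∈ Ω, ContDiffAt ℝ 1 u x) (hw : ∀ x ∈ Ω, ContDiffAt ℝ 1 w x) :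
    ContinuousOn (fun x => ∑ i, u x i * pd i w x) Ω := by
  refine continuousOn_finsetSum _ fun i _ => (comp_contOn hu i).mul fun x hx => ?_
  exact (pd_contDiffAt (k := 1) (m := 0) (hw x hx) (by norm_num) i).continuousAt.continuousWithinAt

lemma wk_classical (hΩ : IsOpen Ω) (hu : ∀ x ∈ Ω, ContDiffAt ℝ 1 u x) {w : Eu n → ℝ}
    (hw : ∀ x ∈ Ω, ContDiffAt ℝ 2 w x) :
    Wk Ω u w (fun x => - lapl w x + ∑ i, u x i * pd i w x) := by
  intro ζ h
  have hw1 : ∀ x ∈ Ω, ContDiffAt ℝ 1 w x := fun x hx => (hw x hx).of_le (by norm_num)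
  have hwc : ContinuousOn w Ω := fun x hx => (hw x hx).continuousAt.continuousWithinAt
  have hwl := hwc.locallyIntegrableOn hΩ.measurableSet (μ := volume)
  have e1 := int_lapl hΩ hw h
  have e2 := int_drift hΩ hu hw1 h
  have i1 : Integrable (fun x => w x * lapl ζ x) :=
    li_mul _ _ hwl (lapl_cont h.cd) (h.cs.mono' ((subset_tsupport _).trans lapl_supp))
      (lapl_supp.trans h.ts)
  have i0 : Integrable (fun x => w x * adj u ζ x) :=
    li_mul _ _ hwl (adj_cont hΩ hu h) (adj_cs h) (adj_supp.trans h.ts)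
  have i2 : Integrable (fun x => w x * (dvg u x * ζ x + ∑ i, u x i * pd i ζ x)) := by
    refine (i0.neg.sub i1).congr (Eventually.of_forall fun x => ?_)
    simp only [adj, Pi.sub_apply, Pi.neg_apply]; ring
  have i3 : Integrable (fun x => lapl w x * ζ x) :=
    li_mul _ _ ((lapl_contOn hw).locallyIntegrableOn hΩ.measurableSet) h.cd.continuous h.cs h.ts
  have i4 : Integrable (fun x => (∑ i, u x i * pd i w x) * ζ x) :=
    li_mul _ _ ((grad_contOn hu hw1).locallyIntegrableOn hΩ.measurableSet)
      h.cd.continuous h.cs h.ts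
  have s1 : ∫ x, w x * adj u ζ x = -(∫ x, w x * lapl ζ x) -
      ∫ x, w x * (dvg u x * ζ x + ∑ i, u x i * pd i ζ x) := by
    rw [← integral_neg, ← integral_sub (by simpa using i1.neg) i2]
    congr 1; ext x; simp only [adj]; ring
  have s2 : ∫ x, (- lapl w x + ∑ i, u x i * pd i w x) * ζ x = -(∫ x, lapl w x * ζ x) +
      ∫ x, (∑ i, u x i * pd i w x) * ζ x := by
    rw [← integral_neg, ← integral_add (by simpa using i3.neg) i4]
    congr 1; ext x; ring
  rw [s1, s2, e1, e2]; ring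

end

lemma hb_ext {T V : Type*} [AddCommGroup T] [Module ℝ T] [AddCommGroup V] [Module ℝ V]
    (A : T →ₗ[ℝ] V) (l : T →ₗ[ℝ] ℝ) (p : V → ℝ)
    (hom : ∀ c : ℝ, 0 < c → ∀ x, p (c • x) = c * p x) (hadd : ∀ x y, p (x + y) ≤ p x + p y)
    (h : ∀ t, l t ≤ p (A t)) :
    ∃ L : V →ₗ[ℝ] ℝ, (∀ t, L (A t) = l t) ∧ ∀ x, L x ≤ p x := by
  have p0 : p 0 = 0 := by
    have := hom 2 (by norm_num) 0
    simp at this; linarith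
  have hle : LinearMap.ker A ≤ LinearMap.ker l := by
    intro t ht
    have ht : A t = 0 := ht
    have h1 := h t
    have h2 := h (-t)
    simp [ht, p0] at h1 h2
    exact le_antisymm h1 h2
  let m : LinearMap.range A →ₗ[ℝ] ℝ :=
    ((LinearMap.ker A).liftQ l hle).comp A.quotKerEquivRange.symm.toLinearMap
  have hm : ∀ t, m ⟨A t, LinearMap.mem_range_self A t⟩ = l t := by
    intro t
    have : A.quotKerEquivRange.symm ⟨A t, LinearMap.mem_range_self A t⟩ =
        (LinearMap.ker A).mkQ t := by
      rw [LinearEquiv.symm_apply_eq]; ext; simp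
    simp [m, this]
  obtain ⟨g, hg1, hg2⟩ := exists_extension_of_le_sublinear ⟨LinearMap.range A, m⟩ p hom hadd (by
    rintro ⟨x, t, rfl⟩
    have := h t
    rw [← hm t] at this
    exact this)
  refine ⟨g, fun t => ?_, hg2⟩
  rw [← hm t]
  exact hg1 ⟨A t, LinearMap.mem_range_self A t⟩

lemma exists_J (ε : ℝ) (hε : 0 < ε) : ∃ J : ℝ → ℝ, ContDiff ℝ 2 J ∧ J 0 = 0 ∧
    (∀ s, 0 ≤ deriv J s) ∧ (∀ s, deriv J s ≤ 1) ∧ (∀ s, 0 ≤ deriv (deriv J) s) ∧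
    (∀ s, max s 0 ≤ J s + ε) ∧ (∀ s, |deriv J s * s - J s| ≤ ε) := by
  have hp : ∀ s : ℝ, 0 < s ^ 2 + ε ^ 2 := fun s => by positivity
  have hq : ∀ s : ℝ, 0 < √(s ^ 2 + ε ^ 2) := fun s => Real.sqrt_pos.2 (hp s)
  have hsq : ∀ s : ℝ, √(s ^ 2 + ε ^ 2) ^ 2 = s ^ 2 + ε ^ 2 := fun s => Real.sq_sqrt (hp s).le
  have habs : ∀ s : ℝ, |s| ≤ √(s ^ 2 + ε ^ 2) := fun s =>
    Real.abs_le_sqrt (by nlinarith [sq_nonneg ε])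
  have hQ : ∀ s : ℝ, HasDerivAt (fun s => √(s ^ 2 + ε ^ 2)) (s / √(s ^ 2 + ε ^ 2)) s := by
    intro s
    have h1 : HasDerivAt (fun s : ℝ => s ^ 2 + ε ^ 2) (2 * s) s := by
      simpa using (hasDerivAt_pow 2 s).add_const (ε ^ 2)
    convert h1.sqrt (hp s).ne' using 1
    field_simp
  have hJ : ∀ s : ℝ, HasDerivAt (fun s => (√(s ^ 2 + ε ^ 2) + s - ε) / 2)
      ((s / √(s ^ 2 + ε ^ 2) + 1) / 2) s := by
    intro s
    exact (((hQ s).add (hasDerivAt_id s)).sub_const ε).div_const 2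
  have hd : deriv (fun s => (√(s ^ 2 + ε ^ 2) + s - ε) / 2) =
      fun s => (s / √(s ^ 2 + ε ^ 2) + 1) / 2 := by
    ext s; exact (hJ s).deriv
  refine ⟨fun s => (√(s ^ 2 + ε ^ 2) + s - ε) / 2, ?_, ?_, ?_, ?_, ?_, ?_, ?_⟩
  · have : ContDiff ℝ 2 (fun s : ℝ => √(s ^ 2 + ε ^ 2)) :=
      ContDiff.sqrt (by fun_prop) (fun s => (hp s).ne')
    fun_prop
  · simp [Real.sqrt_sq hε.le]
  · intro s
    rw [hd]
    have : -1 ≤ s / √(s ^ 2 + ε ^ 2) := by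
      rw [le_div_iff₀ (hq s)]; linarith [neg_abs_le s, habs s]
    simp only; linarith
  · intro s
    rw [hd]
    have : s / √(s ^ 2 + ε ^ 2) ≤ 1 := by
      rw [div_le_one (hq s)]; linarith [le_abs_self s, habs s]
    simp only; linarith
  · intro s
    rw [hd]
    have h2 := (((hasDerivAt_id s).div (hQ s) (hq s).ne').add_const 1).div_const 2
    have h3 : HasDerivAt (fun s => (s / √(s ^ 2 + ε ^ 2) + 1) / 2) _ s := h2
    rw [h3.deriv]
    have : s * (s / √(s ^ 2 + ε ^ 2)) ≤ √(s ^ 2 + ε ^ 2) := by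
      rw [← mul_div_assoc, div_le_iff₀ (hq s), ← sq, ← sq, hsq]; nlinarith [sq_nonneg ε]
    have h5 : 0 ≤ √(s ^ 2 + ε ^ 2) - s * (s / √(s ^ 2 + ε ^ 2)) := by linarith
    simp only [id, one_mul]
    positivity
  · intro s
    have h1 := habs s
    rcases le_total s 0 with h | h
    · rw [max_eq_right h]; rw [abs_of_nonpos h] at h1; linarith
    · rw [max_eq_left h]; rw [abs_of_nonneg h] at h1; linarith
  · intro s
    rw [hd]
    have h1 : ε ≤ √(s ^ 2 + ε ^ 2) := Real.le_sqrt_of_sq_le (by nlinarith [sq_nonneg s])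
    have h4 := hsq s
    have h3 : 0 < √(s ^ 2 + ε ^ 2) := hq s
    simp only
    generalize √(s ^ 2 + ε ^ 2) = Q at *
    have e : (s / Q + 1) / 2 * s - (Q + s - ε) / 2 = (ε - ε ^ 2 / Q) / 2 := by
      field_simp; nlinarith
    rw [e]
    have h5 : ε ^ 2 / Q ≤ ε := by rw [div_le_iff₀ h3]; nlinarith
    have h6 : 0 ≤ ε ^ 2 / Q := by positivity
    rw [abs_le]; constructor <;> linarith

section
variable {n : ℕ} {Ω : Set (Eu n)} {u : Eu n → Eu n}

lemma pd_comp {J : ℝ → ℝ} {ζ : Eu n → ℝ} {x : Eu n} (hJ : DifferentiableAt ℝ J (ζ x))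
    (hζ : DifferentiableAt ℝ ζ x) (i : Fin n) :
    pd i (fun y => J (ζ y)) x = deriv J (ζ x) * pd i ζ x := by
  have := (hJ.hasDerivAt.comp_hasFDerivAt x hζ.hasFDerivAt).fderiv
  simp only [pd]
  rw [show (fun y => J (ζ y)) = J ∘ ζ from rfl, this]
  simp

lemma pd_mul {a b : Eu n → ℝ} {x : Eu n} (ha : DifferentiableAt ℝ a x)
    (hb : DifferentiableAt ℝ b x) (i : Fin n) :
    pd i (fun y => a y * b y) x = a x * pd i b x + pd i a x * b x := by
  simp only [pd, fderiv_fun_mul ha hb]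
  simp; ring

lemma lapl_comp {J : ℝ → ℝ} (hJ : ContDiff ℝ 2 J) {ζ : Eu n → ℝ} (hζ : ContDiff ℝ 2 ζ) (x : Eu n) :
    lapl (fun y => J (ζ y)) x = deriv J (ζ x) * lapl ζ x +
      deriv (deriv J) (ζ x) * ∑ i, (pd i ζ x) ^ 2 := by
  have hJ1 : Differentiable ℝ J := hJ.differentiable (by norm_num)
  have hJ2 : Differentiable ℝ (deriv J) :=
    ((contDiff_succ_iff_deriv (n := 1)).1 hJ).2.2.differentiable (by norm_num)
  have hz : Differentiable ℝ ζ := hζ.differentiable (by norm_num)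
  rw [lapl_eq, lapl_eq, Finset.mul_sum, Finset.mul_sum, ← Finset.sum_add_distrib]
  refine Finset.sum_congr rfl fun i _ => ?_
  have : pd i (fun y => J (ζ y)) = fun y => deriv J (ζ y) * pd i ζ y := by
    ext y; exact pd_comp (hJ1 _) (hz y) i
  rw [this, pd_mul (a := fun y => deriv J (ζ y)) (b := pd i ζ) ((hJ2 _).comp x (hz x))
    ((pd_contDiff (k := 2) (m := 1) hζ (by norm_num) i).differentiable (by norm_num) x),
    pd_comp (hJ2 _) (hz x)]
  ring

lemma Tst.comp {ζ : Eu n → ℝ} (h : Tst Ω ζ) {J : ℝ → ℝ} (hJ : ContDiff ℝ 2 J) (h0 : J 0 = 0) :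
    Tst Ω (fun y => J (ζ y)) := by
  have : tsupport (fun y => J (ζ y)) ⊆ tsupport ζ := by
    apply closure_mono
    intro x hx hx0
    apply hx
    simp only at hx0 ⊢
    rw [hx0, h0]
  exact ⟨hJ.comp h.cd, h.cs.mono' ((subset_tsupport _).trans this), this.trans h.ts⟩

lemma kato (hΩ : IsOpen Ω) (hu : ∀ x ∈ Ω, ContDiffAt ℝ 1 u x) {W F f : Eu n → ℝ}
    (hW0 : ∀ x ∈ Ω, 0 ≤ W x) (hWl : LocallyIntegrableOn W Ω) (hFl : LocallyIntegrableOn F Ω)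
    (hfl : LocallyIntegrableOn f Ω) (hwk : Wk Ω u W F) (hf0 : ∀ x ∈ Ω, 0 ≤ f x)
    (hfF : ∀ x ∈ Ω, f x ≤ F x) {ζ : Eu n → ℝ} (h : Tst Ω ζ) :
    ∫ x, f x * ζ x ≤ ∫ x, W x * max (adj u ζ x) 0 := by
  set K := tsupport ζ with hK
  have hKc : IsCompact K := h.cs
  have hKm : MeasurableSet K := hKc.measurableSet
  have hFK : IntegrableOn F K := hFl.integrableOn_compact_subset h.ts hKc
  have hWK : IntegrableOn W K := hWl.integrableOn_compact_subset h.ts hKc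
  have hfK : IntegrableOn f K := hfl.integrableOn_compact_subset h.ts hKc
  have hdK : ContinuousOn (fun x => |dvg u x|) K := ((dvg_contOn hu).mono h.ts).abs
  have hWd : IntegrableOn (fun x => W x * |dvg u x|) K := hWK.mul_continuousOn hdK hKc
  have hac : Continuous (fun x => max (adj u ζ x) 0) :=
    (adj_cont hΩ hu h).max continuous_const
  have hWa : IntegrableOn (fun x => W x * max (adj u ζ x) 0) K :=
    hWK.mul_continuousOn hac.continuousOn hKc
  have z1 : ∀ x ∉ K, ζ x = 0 := fun x hx => image_eq_zero_of_notMem_tsupport hx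
  have z2 : ∀ x ∉ K, adj u ζ x = 0 := fun x hx =>
    image_eq_zero_of_notMem_tsupport (fun h' => hx (adj_supp h'))
  rw [← setIntegral_eq_integral_of_forall_compl_eq_zero (s := K) (fun x hx => by simp [z1 x hx]),
    ← setIntegral_eq_integral_of_forall_compl_eq_zero (s := K)
      (f := fun x => W x * max (adj u ζ x) 0) (fun x hx => by simp [z2 x hx])]
  set C := (∫ x in K, F x) + ∫ x in K, W x * |dvg u x| with hC
  have key : ∀ ε : ℝ, 0 < ε → ∫ x in K, f x * ζ x ≤
      (∫ x in K, W x * max (adj u ζ x) 0) + ε * C := by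
    intro ε hε
    obtain ⟨J, hJ, J0, J1, J2, J3, J4, J5⟩ := exists_J ε hε
    have ht := h.comp hJ J0
    have e := hwk _ ht
    have z3 : ∀ x ∉ K, J (ζ x) = 0 := fun x hx => by rw [z1 x hx, J0]
    have hts : tsupport (fun y => J (ζ y)) ⊆ K :=
      closure_minimal (fun x hx => by by_contra hx'; exact hx (z3 x hx')) (isClosed_tsupport ζ)
    have z4 : ∀ x ∉ K, adj u (fun y => J (ζ y)) x = 0 := fun x hx =>
      image_eq_zero_of_notMem_tsupport (fun h' => hx (hts (adj_supp h')))
    rw [← setIntegral_eq_integral_of_forall_compl_eq_zero (s := K) (fun x hx => by simp [z4 x hx]),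
      ← setIntegral_eq_integral_of_forall_compl_eq_zero (s := K)
      (f := fun x => F x * J (ζ x)) (fun x hx => by simp [z3 x hx])] at e
    have hJc : Continuous (fun x => J (ζ x)) := ht.cd.continuous
    have hFJ : IntegrableOn (fun x => F x * J (ζ x)) K :=
      hFK.mul_continuousOn hJc.continuousOn hKc
    have b1 : ∫ x in K, f x * ζ x ≤ ∫ x in K, (F x * J (ζ x) + ε * F x) := by
      refine setIntegral_mono_on (hfK.mul_continuousOn h.cd.continuous.continuousOn hKc)
        (hFJ.add (hFK.const_mul ε)) hKm fun x hx => ?_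
      have a1 := hf0 x (h.ts hx)
      have a2 := hfF x (h.ts hx)
      have a3 := J4 (ζ x)
      have a4 : ζ x ≤ max (ζ x) 0 := le_max_left _ _
      have a5 : 0 ≤ max (ζ x) 0 := le_max_right _ _
      calc f x * ζ x ≤ f x * max (ζ x) 0 := by gcongr
        _ ≤ F x * max (ζ x) 0 := by gcongr
        _ ≤ F x * (J (ζ x) + ε) := by
          have : 0 ≤ F x := a1.trans a2
          gcongr
        _ = _ := by ring
    have b2 : ∫ x in K, W x * adj u (fun y => J (ζ y)) x ≤
        ∫ x in K, (W x * max (adj u ζ x) 0 + ε * (W x * |dvg u x|)) := by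
      refine setIntegral_mono_on
        (hWK.mul_continuousOn (adj_cont hΩ hu ht).continuousOn hKc)
        (hWa.add (hWd.const_mul ε)) hKm fun x hx => ?_
      have a1 := hW0 x (h.ts hx)
      have : adj u (fun y => J (ζ y)) x ≤ max (adj u ζ x) 0 + ε * |dvg u x| := by
        have p1 : ∀ i, pd i (fun y => J (ζ y)) x = deriv J (ζ x) * pd i ζ x := fun i =>
          pd_comp (hJ.differentiable (by norm_num) _) (h.cd.differentiable (by norm_num) _) i
        have e1 : adj u (fun y => J (ζ y)) x = deriv J (ζ x) * adj u ζ x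
            - deriv (deriv J) (ζ x) * ∑ i, (pd i ζ x) ^ 2
            + (deriv J (ζ x) * ζ x - J (ζ x)) * dvg u x := by
          simp only [adj, lapl_comp hJ h.cd, p1]
          have : ∑ i, u x i * (deriv J (ζ x) * pd i ζ x) =
              deriv J (ζ x) * ∑ i, u x i * pd i ζ x := by
            rw [Finset.mul_sum]; refine Finset.sum_congr rfl fun i _ => by ring
          rw [this]; ring
        have e2 : 0 ≤ deriv (deriv J) (ζ x) * ∑ i, (pd i ζ x) ^ 2 :=
          mul_nonneg (J3 _) (Finset.sum_nonneg fun i _ => sq_nonneg _)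
        have e3 : (deriv J (ζ x) * ζ x - J (ζ x)) * dvg u x ≤ ε * |dvg u x| := by
          refine (le_abs_self _).trans ?_
          rw [abs_mul]
          exact mul_le_mul_of_nonneg_right (J5 _) (abs_nonneg _)
        have e4 : deriv J (ζ x) * adj u ζ x ≤ max (adj u ζ x) 0 := by
          have q1 : adj u ζ x ≤ max (adj u ζ x) 0 := le_max_left _ _
          have q2 : 0 ≤ max (adj u ζ x) 0 := le_max_right _ _
          nlinarith [J1 (ζ x), J2 (ζ x)]
        linarith
      calc _ ≤ W x * (max (adj u ζ x) 0 + ε * |dvg u x|) := by gcongr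
        _ = _ := by ring
    rw [integral_add hFJ (hFK.const_mul ε), integral_const_mul] at b1
    rw [integral_add hWa (hWd.const_mul ε), integral_const_mul] at b2
    rw [hC]; nlinarith
  refine le_of_forall_pos_le_add fun δ hδ => ?_
  have := key (δ / (|C| + 1)) (by positivity)
  refine this.trans ?_
  have : δ / (|C| + 1) * C ≤ δ := by
    rw [div_mul_eq_mul_div, div_le_iff₀ (by positivity)]
    nlinarith [le_abs_self C]
  linarith

end

section
variable {n : ℕ} {Ω : Set (Eu n)} {u : Eu n → Eu n}

lemma pd_add {a b : Eu n → ℝ} {x : Eu n} (ha : DifferentiableAt ℝ a x)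
    (hb : DifferentiableAt ℝ b x) (i : Fin n) :
    pd i (a + b) x = pd i a x + pd i b x := by
  simp [pd, fderiv_add ha hb]

lemma pd_smul {a : Eu n → ℝ} {x : Eu n} (c : ℝ) (i : Fin n) :
    pd i (c • a) x = c * pd i a x := by
  simp [pd, fderiv_const_smul_field]

lemma lapl_add {a b : Eu n → ℝ} (ha : ContDiff ℝ 2 a) (hb : ContDiff ℝ 2 b) (x : Eu n) :
    lapl (a + b) x = lapl a x + lapl b x := by
  rw [lapl_eq, lapl_eq, lapl_eq, ← Finset.sum_add_distrib]
  refine Finset.sum_congr rfl fun i _ => ?_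
  have : pd i (a + b) = pd i a + pd i b := by
    ext y; exact pd_add (ha.differentiable (by norm_num) y) (hb.differentiable (by norm_num) y) i
  rw [this]
  exact pd_add ((pd_contDiff (k := 2) (m := 1) ha (by norm_num) i).differentiable (by norm_num) x)
   ((pd_contDiff (k := 2) (m := 1) hb (by norm_num) i).differentiable (by norm_num) x) i

lemma lapl_smul (a : Eu n → ℝ) (c : ℝ) (x : Eu n) :
    lapl (c • a) x = c * lapl a x := by
  rw [lapl_eq, lapl_eq, Finset.mul_sum]
  refine Finset.sum_congr rfl fun i _ => ?_
  have : pd i (c • a) = c • pd i a := by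
    ext y; exact pd_smul c i
  rw [this, pd_smul]

lemma adj_add {a b : Eu n → ℝ} (ha : ContDiff ℝ 2 a) (hb : ContDiff ℝ 2 b) (x : Eu n) :
    adj u (a + b) x = adj u a x + adj u b x := by
  simp only [adj, lapl_add ha hb, pd_add (ha.differentiable (by norm_num) x)
    (hb.differentiable (by norm_num) x), mul_add, Finset.sum_add_distrib, Pi.add_apply]
  ring

lemma adj_smul (a : Eu n → ℝ) (c : ℝ) (x : Eu n) :
    adj u (c • a) x = c * adj u a x := by
  simp only [adj, lapl_smul, pd_smul, Pi.smul_apply, smul_eq_mul]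
  rw [show (∑ i, u x i * (c * pd i a x)) = c * ∑ i, u x i * pd i a x by
    rw [Finset.mul_sum]; refine Finset.sum_congr rfl fun i _ => by ring]
  ring

lemma Tst.add {a b : Eu n → ℝ} (ha : Tst Ω a) (hb : Tst Ω b) : Tst Ω (a + b) :=
  ⟨ha.cd.add hb.cd, ha.cs.add hb.cs, (tsupport_add a b).trans (union_subset ha.ts hb.ts)⟩

lemma Tst.smul {a : Eu n → ℝ} (ha : Tst Ω a) (c : ℝ) : Tst Ω (c • a) := by
  have : tsupport (c • a) ⊆ tsupport a := tsupport_mul_sub (fun _ => c) a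
  exact ⟨ha.cd.const_smul c, ha.cs.mono' ((subset_tsupport _).trans this), this.trans ha.ts⟩

variable (Ω) in
/-- space of test functions -/
def TS : Submodule ℝ (Eu n → ℝ) where
  carrier := {ζ | Tst Ω ζ}
  add_mem' := fun ha hb => ha.add hb
  zero_mem' := ⟨contDiff_const, HasCompactSupport.zero, by
    rw [show tsupport (0 : Eu n → ℝ) = ∅ from by simp [tsupport]]; exact empty_subset _⟩
  smul_mem' := fun c _ ha => ha.smul c

lemma rinner_mul (a b : ℝ) : ⟪a, b⟫ = a * b := by simp [mul_comm]

lemma exists_weak (hΩ : IsOpen Ω) (hΩb : Bornology.IsBounded Ω)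
    (hu : ∀ x ∈ Ω, ContDiffAt ℝ 1 u x) {W f : Eu n → ℝ} (hWm : Measurable W) {M : ℝ}
    (hW0 : ∀ x ∈ Ω, 0 ≤ W x) (hWM : ∀ x ∈ Ω, W x ≤ M) (hf : LocallyIntegrableOn f Ω)
    (h : ∀ ζ, Tst Ω ζ → ∫ x, f x * ζ x ≤ ∫ x, W x * max (adj u ζ x) 0) :
    ∃ v : Eu n → ℝ, Measurable v ∧ (∀ x ∈ Ω, 0 ≤ v x) ∧ (∀ x ∈ Ω, v x ≤ W x) ∧
      (∀ x ∉ Ω, v x = 0) ∧ Wk Ω u v f := by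
  have hΩm : MeasurableSet Ω := hΩ.measurableSet
  set μ : Measure (Eu n) := volume.restrict Ω with hμ
  have : IsFiniteMeasure μ := ⟨by
    rw [hμ, Measure.restrict_apply_univ]; exact hΩb.measure_lt_top⟩
  have hmem : ∀ x, x ∈ Ω → W x ∈ Icc 0 M := fun x hx => ⟨hW0 x hx, hWM x hx⟩
  have hWL : MemLp W 2 μ := by
    refine MemLp.of_bound hWm.aestronglyMeasurable M ?_
    refine (ae_restrict_iff' hΩm).2 (ae_of_all _ fun x hx => ?_)
    rw [Real.norm_eq_abs, abs_of_nonneg (hW0 x hx)]; exact hWM x hx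
  have hWae : ∀ᵐ x ∂μ, 0 ≤ W x := (ae_restrict_iff' hΩm).2 (ae_of_all _ hW0)
  have hadjL : ∀ ζ, Tst Ω ζ → MemLp (adj u ζ) 2 μ := fun ζ hζ =>
    ((adj_cont hΩ hu hζ).memLp_of_hasCompactSupport (adj_cs hζ)).restrict Ω
  let A : TS Ω →ₗ[ℝ] Lp ℝ 2 μ :=
    { toFun := fun ζ => (hadjL ζ.1 ζ.2).toLp _
      map_add' := fun a b => by
        rw [← MemLp.toLp_add]
        refine (MemLp.toLp_eq_toLp_iff _ _).2 (ae_of_all _ fun x => ?_)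
        exact adj_add a.2.cd b.2.cd x
      map_smul' := fun c a => by
        rw [RingHom.id_apply, ← MemLp.toLp_const_smul]
        refine (MemLp.toLp_eq_toLp_iff _ _).2 (ae_of_all _ fun x => ?_)
        exact adj_smul a.1 c x }
  let l : TS Ω →ₗ[ℝ] ℝ :=
    { toFun := fun ζ => ∫ x, f x * ζ.1 x
      map_add' := fun a b => by
        rw [← integral_add (li_mul f a.1 hf a.2.cd.continuous a.2.cs a.2.ts)
          (li_mul f b.1 hf b.2.cd.continuous b.2.cs b.2.ts)]
        refine integral_congr_ae (ae_of_all _ fun x => ?_)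
        simp [mul_add]
      map_smul' := fun c a => by
        rw [RingHom.id_apply, smul_eq_mul, ← integral_const_mul]
        refine integral_congr_ae (ae_of_all _ fun x => ?_)
        simp; ring }
  let p : Lp ℝ 2 μ → ℝ := fun h => ∫ x, W x * max (h x) 0 ∂μ
  have hpi : ∀ h : Lp ℝ 2 μ, Integrable (fun x => W x * max (h x) 0) μ := fun h =>
    hWL.integrable_mul (Lp.memLp h).pos_part
  have hlp : ∀ t, l t ≤ p (A t) := by
    intro t
    refine (h t.1 t.2).trans (le_of_eq ?_)
    have e1 : ∫ x, W x * max (adj u t.1 x) 0 = ∫ x, W x * max (adj u t.1 x) 0 ∂μ := by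
      rw [hμ, setIntegral_eq_integral_of_forall_compl_eq_zero]
      intro x hx
      have : adj u t.1 x = 0 :=
        image_eq_zero_of_notMem_tsupport (fun h' => hx (t.2.ts (adj_supp h')))
      simp [this]
    rw [e1]
    refine integral_congr_ae ?_
    filter_upwards [(hadjL t.1 t.2).coeFn_toLp] with x hx
    simp only [A, LinearMap.coe_mk, AddHom.coe_mk]
    rw [hx]
  obtain ⟨L, hL1, hL2⟩ := hb_ext A l p (by
      intro c hc x
      simp only [p]
      rw [← integral_const_mul]
      refine integral_congr_ae ?_
      filter_upwards [Lp.coeFn_smul c x] with y hy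
      rw [hy, Pi.smul_apply, smul_eq_mul, ← mul_zero c, ← mul_max_of_nonneg _ _ hc.le]
      ring_nf) (by
      intro x y
      simp only [p]
      rw [← integral_add (hpi x) (hpi y)]
      refine integral_mono_ae (hpi _) ((hpi x).add (hpi y)) ?_
      filter_upwards [Lp.coeFn_add x y, hWae] with z hz hWz
      simp only [hz, Pi.add_apply]
      rw [← mul_add]
      refine mul_le_mul_of_nonneg_left ?_ hWz
      exact max_le (add_le_add (le_max_left _ _) (le_max_left _ _))
        (add_nonneg (le_max_right _ _) (le_max_right _ _))) hlp
  set C := ‖hWL.toLp W‖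
  have hpb : ∀ h, p h ≤ C * ‖h‖ := by
    intro h
    have h1 : p h ≤ ⟪hWL.toLp W, |h|⟫ := by
      rw [L2.inner_def]
      have : Integrable (fun x => ⟪(hWL.toLp W) x, (|h| : Lp ℝ 2 μ) x⟫) μ := L2.integrable_inner _ _
      refine integral_mono_ae (hpi h) this ?_
      filter_upwards [hWL.coeFn_toLp, Lp.coeFn_abs h, hWae] with x hx hx2 hx3
      simp only [hx, hx2, rinner_mul]
      refine mul_le_mul_of_nonneg_left ?_ hx3
      exact max_le (le_abs_self _) (abs_nonneg _)
    refine h1.trans ((real_inner_le_norm _ _).trans ?_)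
    rw [norm_abs_eq_norm]
  let Lc : Lp ℝ 2 μ →L[ℝ] ℝ := L.mkContinuous C (by
    intro x
    rw [Real.norm_eq_abs, abs_le]
    constructor
    · have := (hL2 (-x)).trans (hpb _)
      rw [map_neg, norm_neg] at this
      linarith
    · exact (hL2 x).trans (hpb x))
  let v0 := (InnerProductSpace.toDual ℝ (Lp ℝ 2 μ)).symm Lc
  have hv0 : ∀ h, ⟪v0, h⟫ = L h := fun h => InnerProductSpace.toDual_symm_apply
  have hv0i : Integrable v0 μ := (Lp.memLp v0).integrable (by norm_num)
  have hWi : Integrable W μ := hWL.integrable (by norm_num)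
  have k1 : v0 ≤ᵐ[μ] W := by
    refine ae_le_of_forall_setIntegral_le hv0i hWi fun s hs _ => ?_
    have h1 := hL2 (indicatorConstLp 2 hs (measure_ne_top μ s) (1:ℝ))
    rw [← hv0, real_inner_comm, L2.inner_indicatorConstLp_one] at h1
    refine h1.trans (le_of_eq ?_)
    simp only [p]
    rw [← integral_indicator hs]
    refine integral_congr_ae ?_
    filter_upwards [indicatorConstLp_coeFn (p := 2) (hs := hs) (hμs := measure_ne_top μ s) (c := (1:ℝ))] with x hx
    rw [hx]
    by_cases hxs : x ∈ s <;> simp [hxs]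
  have k2 : 0 ≤ᵐ[μ] v0 := by
    refine ae_nonneg_of_forall_setIntegral_nonneg hv0i fun s hs _ => ?_
    have h1 := hL2 (-indicatorConstLp 2 hs (measure_ne_top μ s) (1:ℝ))
    rw [map_neg, ← hv0, real_inner_comm, L2.inner_indicatorConstLp_one] at h1
    have : p (-indicatorConstLp 2 hs (measure_ne_top μ s) (1:ℝ)) = 0 := by
      simp only [p]
      refine integral_eq_zero_of_ae ?_
      filter_upwards [indicatorConstLp_coeFn (p := 2) (hs := hs) (hμs := measure_ne_top μ s) (c := (1:ℝ)), Lp.coeFn_neg (indicatorConstLp 2 hs (measure_ne_top μ s) (1:ℝ))] with x hx hx2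
      rw [hx2, Pi.neg_apply, hx]
      by_cases hxs : x ∈ s <;> simp [hxs]
    linarith
  have hm0 : Measurable v0 := (Lp.stronglyMeasurable v0).measurable
  let v : Eu n → ℝ := Ω.indicator (fun x => max 0 (min (v0 x) (W x)))
  have hvv : v =ᵐ[μ] v0 := by
    filter_upwards [k1, k2, ae_restrict_mem hΩm] with x h1 h2 h3
    simp only [v, indicator_of_mem h3, min_eq_left h1]
    exact max_eq_right h2
  refine ⟨v, (measurable_const.max (hm0.min hWm)).indicator hΩm, ?_, ?_, ?_, ?_⟩
  · intro x hx; simp [v, hx]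
  · intro x hx; simp [v, hx, hW0 x hx]
  · intro x hx; simp [v, hx]
  · intro ζ hζ
    have e1 : ∫ x, v x * adj u ζ x = ∫ x, v x * adj u ζ x ∂μ := by
      rw [hμ, setIntegral_eq_integral_of_forall_compl_eq_zero]
      intro x hx; simp [v, hx]
    rw [e1]
    have := hL1 ⟨ζ, hζ⟩
    rw [← hv0, L2.inner_def] at this
    refine Eq.trans ?_ this
    refine integral_congr_ae ?_
    filter_upwards [hvv, (hadjL ζ hζ).coeFn_toLp] with x h1 h2
    simp only [A, LinearMap.coe_mk, AddHom.coe_mk, rinner_mul]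
    rw [h1, h2]
end

section
variable {n : ℕ} {Ω : Set (Eu n)} {u : Eu n → Eu n}

lemma li_bdd (hΩ : IsOpen Ω) (hΩb : Bornology.IsBounded Ω) {f : Eu n → ℝ} (hf : Measurable f)
    {M : ℝ} (hM : ∀ x ∈ Ω, |f x| ≤ M) : LocallyIntegrableOn f Ω := by
  refine IntegrableOn.locallyIntegrableOn ?_
  exact Measure.integrableOn_of_bounded (M := M) hΩb.measure_lt_top.ne hf.aestronglyMeasurable
    ((ae_restrict_iff' hΩ.measurableSet).2 (ae_of_all _ hM))

lemma Wk.add (hΩ : IsOpen Ω) (hu : ∀ x ∈ Ω, ContDiffAt ℝ 1 u x) {v f v' f' : Eu n → ℝ}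
    (h : Wk Ω u v f) (h' : Wk Ω u v' f') (hv : LocallyIntegrableOn v Ω)
    (hv' : LocallyIntegrableOn v' Ω) (hf : LocallyIntegrableOn f Ω)
    (hf' : LocallyIntegrableOn f' Ω) : Wk Ω u (fun x => v x + v' x) (fun x => f x + f' x) := by
  intro ζ hζ
  have hs := (adj_supp (u := u)).trans hζ.ts
  simp only [add_mul]
  rw [integral_add (li_mul v _ hv (adj_cont hΩ hu hζ) (adj_cs hζ) hs)
    (li_mul v' _ hv' (adj_cont hΩ hu hζ) (adj_cs hζ) hs),
    integral_add (li_mul f _ hf hζ.cd.continuous hζ.cs hζ.ts)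
    (li_mul f' _ hf' hζ.cd.continuous hζ.cs hζ.ts), h ζ hζ, h' ζ hζ]

lemma Wk.neg {v f : Eu n → ℝ} (h : Wk Ω u v f) : Wk Ω u (fun x => - v x) (fun x => - f x) := by
  intro ζ hζ
  simp only [neg_mul, integral_neg, h ζ hζ]

lemma exists_iter (hΩ : IsOpen Ω) (hΩb : Bornology.IsBounded Ω)
    (hu : ∀ x ∈ Ω, ContDiffAt ℝ 1 u x) {w F : Eu n → ℝ} (hwm : Measurable w) {M : ℝ}
    (hw0 : ∀ x ∈ Ω, 0 ≤ w x) (hwM : ∀ x ∈ Ω, w x ≤ M) (hF : LocallyIntegrableOn F Ω)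
    (hwF : Wk Ω u w F) {G : ℝ → ℝ} (hGc : Continuous G) (hGm : MonotoneOn G (Ici 0))
    (hG0 : 0 ≤ G 0) (hGF : ∀ x ∈ Ω, G (w x) ≤ F x) :
    ∃ v : Eu n → ℝ, Measurable v ∧ (∀ x ∈ Ω, 0 ≤ v x) ∧ (∀ x ∈ Ω, v x ≤ w x) ∧
      (∀ x ∉ Ω, v x = 0) ∧ Wk Ω u v (fun x => G (v x)) := by
  let P : (Eu n → ℝ) → Prop := fun v => Measurable v ∧ (∀ x ∈ Ω, 0 ≤ v x) ∧ (∀ x ∈ Ω, v x ≤ w x) ∧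
    (∀ x ∉ Ω, v x = 0) ∧ ∃ f, LocallyIntegrableOn f Ω ∧ Wk Ω u v f ∧ (∀ x ∈ Ω, 0 ≤ f x) ∧
      ∀ x ∈ Ω, f x ≤ G (v x)
  have hGb : ∀ v : Eu n → ℝ, (∀ x ∈ Ω, 0 ≤ v x) → (∀ x ∈ Ω, v x ≤ w x) →
      ∀ x ∈ Ω, 0 ≤ G (v x) ∧ G (v x) ≤ G M := by
    intro v h0 h1 x hx
    exact ⟨hG0.trans (hGm (by simp) (h0 x hx) (h0 x hx)),
      hGm (h0 x hx) ((hw0 x hx).trans (hwM x hx)) ((h1 x hx).trans (hwM x hx))⟩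
  have hGl : ∀ v : Eu n → ℝ, Measurable v → (∀ x ∈ Ω, 0 ≤ v x) → (∀ x ∈ Ω, v x ≤ w x) →
      LocallyIntegrableOn (fun x => G (v x)) Ω := by
    intro v hm h0 h1
    refine li_bdd hΩ hΩb (hGc.measurable.comp hm) (M := G M) fun x hx => ?_
    have := hGb v h0 h1 x hx
    rw [abs_of_nonneg this.1]; exact this.2
  have hvl : ∀ v : Eu n → ℝ, Measurable v → (∀ x ∈ Ω, 0 ≤ v x) → (∀ x ∈ Ω, v x ≤ w x) →
      LocallyIntegrableOn v Ω := by
    intro v hm h0 h1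
    refine li_bdd hΩ hΩb hm (M := M) fun x hx => ?_
    rw [abs_of_nonneg (h0 x hx)]; exact (h1 x hx).trans (hwM x hx)
  have hwl := hvl w hwm hw0 (fun _ _ => le_rfl)
  have step : ∀ v : {v // P v}, ∃ v' : {v // P v}, (∀ x ∈ Ω, v.1 x ≤ v'.1 x) ∧
      Wk Ω u v'.1 (fun x => G (v.1 x)) := by
    rintro ⟨v, hm, h0, h1, hz, f, hfl, hwf, hf0, hfG⟩
    have hvl' := hvl v hm h0 h1
    have hGl' := hGl v hm h0 h1
    have a1 : Wk Ω u (fun x => w x + - v x) (fun x => F x + - f x) :=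
      hwF.add hΩ hu hwf.neg hwl hvl'.neg hF hfl.neg
    have b1 : LocallyIntegrableOn (fun x => w x + - v x) Ω := hwl.add hvl'.neg
    have b2 : LocallyIntegrableOn (fun x => F x + - f x) Ω := hF.add hfl.neg
    have b3 : LocallyIntegrableOn (fun x => G (v x) + - f x) Ω := hGl'.add hfl.neg
    have c1 : ∀ x ∈ Ω, 0 ≤ w x + - v x := fun x hx => by linarith [h1 x hx]
    have c2 : ∀ x ∈ Ω, w x + - v x ≤ M := fun x hx => by linarith [h0 x hx, hwM x hx]
    obtain ⟨z, zm, z0, z1, zz, zw⟩ := exists_weak hΩ hΩb hu (W := fun x => w x + - v x)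
      (f := fun x => G (v x) + - f x) (hwm.add hm.neg) c1 c2 b3
      (fun ζ hζ => kato hΩ hu c1 b1 b2 b3 a1 (fun x hx => by linarith [hfG x hx])
        (fun x hx => by
          have := hGm (h0 x hx) (hw0 x hx) (h1 x hx)
          linarith [hGF x hx]) hζ)
    have zl := hvl z zm z0 (fun x hx => (z1 x hx).trans (by simpa using h0 x hx))
    have a2 := hwf.add hΩ hu zw hvl' zl hfl b3
    have a3 : Wk Ω u (fun x => v x + z x) (fun x => G (v x)) := by
      simpa using a2
    refine ⟨⟨fun x => v x + z x, hm.add zm, fun x hx => add_nonneg (h0 x hx) (z0 x hx),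
      fun x hx => by linarith [z1 x hx], fun x hx => by simp [hz x hx, zz x hx],
      fun x => G (v x), hGl', a3, fun x hx => (hGb v h0 h1 x hx).1, fun x hx => ?_⟩,
      fun x hx => by simpa using z0 x hx, a3⟩
    exact hGm (h0 x hx) (add_nonneg (h0 x hx) (z0 x hx)) (by simpa using z0 x hx)
  choose S hS1 hS2 using step
  have hP0 : P (fun _ => 0) := by
    refine ⟨measurable_const, fun _ _ => le_rfl, hw0, fun _ _ => rfl, fun _ => 0,
      locallyIntegrable_const (μ := volume) (0:ℝ) |>.locallyIntegrableOn _, fun ζ _ => by simp, fun _ _ => le_rfl, fun _ _ => hG0⟩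
  let s : ℕ → {v // P v} := fun k => S^[k] ⟨_, hP0⟩
  have hs : ∀ k, s (k+1) = S (s k) := fun k => Function.iterate_succ_apply' _ _ _
  let v : Eu n → ℝ := fun x => ⨆ k, (s k).1 x
  have hlim : ∀ x, Tendsto (fun k => (s k).1 x) atTop (𝓝 (v x)) := by
    intro x
    refine tendsto_atTop_ciSup (monotone_nat_of_le_succ fun k => ?_) ?_
    · by_cases hx : x ∈ Ω
      · rw [hs]; exact hS1 _ x hx
      · rw [(s k).2.2.2.2.1 x hx, (s (k+1)).2.2.2.2.1 x hx]
    · refine ⟨max (w x) 0, ?_⟩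
      rintro _ ⟨k, rfl⟩
      by_cases hx : x ∈ Ω
      · exact ((s k).2.2.2.1 x hx).trans (le_max_left _ _)
      · simp only; rw [(s k).2.2.2.2.1 x hx]; exact le_max_right _ _
  refine ⟨v, measurable_of_tendsto_metrizable (fun k => (s k).2.1) (tendsto_pi_nhds.2 hlim),
    fun x hx => ge_of_tendsto' (hlim x) fun k => (s k).2.2.1 x hx,
    fun x hx => le_of_tendsto' (hlim x) fun k => (s k).2.2.2.1 x hx,
    fun x hx => tendsto_nhds_unique (hlim x) (by
      simp only [(s _).2.2.2.2.1 x hx]; exact tendsto_const_nhds), fun ζ hζ => ?_⟩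
  have ha := adj_cont hΩ hu hζ
  have e : ∀ k, ∫ x, (s (k+1)).1 x * adj u ζ x = ∫ x, G ((s k).1 x) * ζ x := by
    intro k; rw [hs]; exact hS2 _ ζ hζ
  have t1 : Tendsto (fun k => ∫ x, (s (k+1)).1 x * adj u ζ x) atTop (𝓝 (∫ x, v x * adj u ζ x)) := by
    refine tendsto_integral_of_dominated_convergence (fun x => M * |adj u ζ x|)
      (fun k => ((s _).2.1.mul ha.measurable).aestronglyMeasurable)
      ((ha.integrable_of_hasCompactSupport (adj_cs hζ)).abs.const_mul M)
      (fun k => ae_of_all _ fun x => ?_)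
      (ae_of_all _ fun x => ((tendsto_add_atTop_iff_nat 1).2 (hlim x)).mul_const _)
    by_cases hx : x ∈ Ω
    · rw [Real.norm_eq_abs, abs_mul, abs_of_nonneg ((s (k+1)).2.2.1 x hx)]
      exact mul_le_mul_of_nonneg_right (((s (k+1)).2.2.2.1 x hx).trans (hwM x hx)) (abs_nonneg _)
    · have : adj u ζ x = 0 :=
        image_eq_zero_of_notMem_tsupport (fun h' => hx (hζ.ts (adj_supp h')))
      simp [this]
  have t2 : Tendsto (fun k => ∫ x, G ((s k).1 x) * ζ x) atTop (𝓝 (∫ x, G (v x) * ζ x)) := by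
    refine tendsto_integral_of_dominated_convergence (fun x => G M * |ζ x|)
      (fun k => ((hGc.measurable.comp (s _).2.1).mul hζ.cd.continuous.measurable).aestronglyMeasurable)
      ((hζ.cd.continuous.integrable_of_hasCompactSupport hζ.cs).abs.const_mul _)
      (fun k => ae_of_all _ fun x => ?_)
      (ae_of_all _ fun x => ((hGc.tendsto _).comp (hlim x)).mul_const _)
    by_cases hx : x ∈ Ω
    · have := hGb _ (s k).2.2.1 (s k).2.2.2.1 x hx
      rw [Real.norm_eq_abs, abs_mul, abs_of_nonneg this.1]
      exact mul_le_mul_of_nonneg_right this.2 (abs_nonneg _)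
    · have : ζ x = 0 :=
        image_eq_zero_of_notMem_tsupport (fun h' => hx (hζ.ts h'))
      simp [this]
  simp only [e] at t1
  exact tendsto_nhds_unique t1 t2
end

lemma exists_P1 (n : ℕ) : ∃ P : ℝ → ℝ, ContDiff ℝ ∞ P ∧
    (∀ s, 1 ≤ s → 2 ^ n * P (4 * s) - P s = 0) ∧
    (∀ s, 0 ≤ 4 * s * deriv P s + 2 * n * P s) ∧
    (∀ s, 1 ≤ s → 4 * s * deriv P s + 2 * n * P s = 0) ∧
    (∃ s, 0 < s ∧ 0 < 4 * s * deriv P s + 2 * n * P s) := by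
  set a : ℝ := -(n / 2 : ℝ) with ha
  let χ : ℝ → ℝ := fun s => Real.smoothTransition (2 * s - 1)
  have hχ : ContDiff ℝ ∞ χ := (Real.smoothTransition.contDiff (n := ⊤)).comp (by fun_prop)
  have hχd : Differentiable ℝ χ := hχ.differentiable (by simp)
  have hχm : Monotone χ := fun x y h => Real.smoothTransition.monotone (by linarith)
  have hχ0 : ∀ s, s ≤ 1/2 → χ s = 0 := fun s hs =>
    Real.smoothTransition.zero_of_nonpos (by linarith)
  have hχ1 : ∀ s, 1 ≤ s → χ s = 1 := fun s hs =>
    Real.smoothTransition.one_of_one_le (by linarith)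
  have hχd1 : ∀ s, 1 ≤ s → deriv χ s = 0 := by
    intro s hs
    refine IsLocalMax.deriv_eq_zero (Eventually.of_forall fun t => ?_)
    rw [hχ1 s hs]; exact Real.smoothTransition.le_one _
  have hχd0 : ∀ s, s ≤ 1/2 → deriv χ s = 0 := by
    intro s hs
    refine IsLocalMin.deriv_eq_zero (Eventually.of_forall fun t => ?_)
    rw [hχ0 s hs]; exact Real.smoothTransition.nonneg _
  let P : ℝ → ℝ := fun s => χ s * s ^ a
  have hP0 : ∀ s, s < 1/2 → P =ᶠ[𝓝 s] fun _ => 0 := by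
    intro s hs
    filter_upwards [Iio_mem_nhds hs] with t ht
    simp [P, hχ0 t (le_of_lt ht)]
  have hPd : ∀ s, 0 < s → HasDerivAt P (deriv χ s * s ^ a + χ s * (a * s ^ (a - 1))) s := by
    intro s hs
    exact (hχd s).hasDerivAt.mul (Real.hasDerivAt_rpow_const (Or.inl hs.ne'))
  have hPr : ∀ s, 0 < s → 4 * s * deriv P s + 2 * n * P s = 4 * s * s ^ a * deriv χ s := by
    intro s hs
    rw [(hPd s hs).deriv, Real.rpow_sub_one hs.ne']
    simp only [P, ha]
    field_simp
    ring
  have hPr0 : ∀ s, s < 1/2 → 4 * s * deriv P s + 2 * n * P s = 0 := by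
    intro s hs
    rw [(hP0 s hs).deriv_eq, (hP0 s hs).eq_of_nhds]; simp
  refine ⟨P, ?_, ?_, ?_, ?_, ?_⟩
  · rw [contDiff_iff_contDiffAt]
    intro s
    rcases lt_or_ge s (1/2) with h | h
    · exact contDiffAt_const.congr_of_eventuallyEq (hP0 s h)
    · exact hχ.contDiffAt.mul (Real.contDiffAt_rpow_const_of_ne (by linarith))
  · intro s hs
    simp only [P, hχ1 s hs, hχ1 (4 * s) (by linarith), one_mul]
    rw [Real.mul_rpow (by norm_num) (by linarith)]
    have : (2:ℝ) ^ n * 4 ^ a = 1 := by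
      rw [show (4:ℝ) = 2 ^ (2:ℝ) by norm_num, ← Real.rpow_mul (by norm_num),
        ← Real.rpow_natCast, ← Real.rpow_add (by norm_num), ha]
      ring_nf; simp
    rw [← mul_assoc, this]; ring
  · intro s
    rcases lt_or_ge s (1/2) with h | h
    · rw [hPr0 s h]
    · have hs : 0 < s := by linarith
      rw [hPr s hs]
      have : 0 ≤ deriv χ s := hχm.deriv_nonneg
      positivity
  · intro s hs
    rw [hPr s (by linarith), hχd1 s hs, mul_zero]
  · by_contra! hc
    have hz : ∀ s, deriv χ s = 0 := by
      intro s
      rcases le_or_gt s (1/2) with h | h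
      · exact hχd0 s h
      · have hs : 0 < s := by linarith
        have h1 := hc s hs
        rw [hPr s hs] at h1
        have : 0 ≤ deriv χ s := hχm.deriv_nonneg
        have h2 : 0 < 4 * s * s ^ a := by positivity
        nlinarith
    have := is_const_of_deriv_eq_zero hχd hz 0 1
    rw [hχ0 0 (by norm_num), hχ1 1 le_rfl] at this
    norm_num at this

lemma pd_normsq {n : ℕ} (i : Fin n) (x : Eu n) : pd i (fun y => ‖y‖ ^ 2) x = 2 * x i := by
  have := (hasStrictFDerivAt_norm_sq x).hasFDerivAt.fderiv
  simp only [pd]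
  rw [this]
  simp [ei, EuclideanSpace.inner_single_right]

lemma pd_coord {n : ℕ} (i : Fin n) (x : Eu n) : pd i (fun y => 2 * y i) x = 2 := by
  have h : HasFDerivAt (fun y : Eu n => 2 * y i)
    ((2:ℝ) • (EuclideanSpace.proj (𝕜 := ℝ) i : Eu n →L[ℝ] ℝ)) x :=
    (EuclideanSpace.proj (𝕜 := ℝ) i : Eu n →L[ℝ] ℝ).hasFDerivAt.const_mul 2
  simp only [pd]
  rw [h.fderiv]
  simp [ei]

lemma lapl_radial {n : ℕ} {K : ℝ → ℝ} (hK : ContDiff ℝ 2 K) (x : Eu n) :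
    lapl (fun y => K (‖y‖ ^ 2)) x = 4 * ‖x‖ ^ 2 * deriv (deriv K) (‖x‖ ^ 2) +
      2 * n * deriv K (‖x‖ ^ 2) := by
  have h2 : ContDiff ℝ 2 (fun y : Eu n => ‖y‖ ^ 2) := contDiff_norm_sq ℝ
  rw [lapl_comp hK h2]
  have e1 : lapl (fun y : Eu n => ‖y‖ ^ 2) x = 2 * n := by
    rw [lapl_eq]
    have : ∀ i, pd i (fun y : Eu n => ‖y‖ ^ 2) = fun y => 2 * y i := by
      intro i; ext y; exact pd_normsq i y
    simp only [this, pd_coord]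
    simp [mul_comm]
  have e2 : ∑ i, (pd i (fun y : Eu n => ‖y‖ ^ 2) x) ^ 2 = 4 * ‖x‖ ^ 2 := by
    rw [EuclideanSpace.norm_sq_eq, Finset.mul_sum]
    refine Finset.sum_congr rfl fun i _ => ?_
    rw [pd_normsq]
    simp; ring
  rw [e1, e2]; ring

lemma exists_kernel {n : ℕ} (hn : 0 < n) : ∃ ρ Θ : Eu n → ℝ, ContDiff ℝ 2 ρ ∧ ContDiff ℝ 2 Θ ∧
    (∀ x, 1 ≤ ‖x‖ → ρ x = 0) ∧ (∀ x, 1 ≤ ‖x‖ → Θ x = 0) ∧ ∫ x, ρ x = 1 ∧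
    ∀ x, 2 ^ n * ρ ((2:ℝ) • x) - ρ x = lapl Θ x := by
  obtain ⟨P1, hP1, hP2, hr0, hr1, s0, hs0, hrs⟩ := exists_P1 n
  have hd : ContDiff ℝ ∞ (deriv P1) := (contDiff_infty_iff_deriv.1 hP1).2
  have hP1d : Differentiable ℝ P1 := hP1.differentiable (by simp)
  let r : ℝ → ℝ := fun s => 4 * s * deriv P1 s + 2 * n * P1 s
  have hrc : ContDiff ℝ 2 r := by
    have h1 : ContDiff ℝ 2 (deriv P1) := contDiff_infty.1 hd 2
    have h2 : ContDiff ℝ 2 P1 := contDiff_infty.1 hP1 2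
    fun_prop
  let P : ℝ → ℝ := fun s => 2 ^ n * P1 (4 * s) - P1 s
  have hPc : ContDiff ℝ 1 P := by
    have h2 : ContDiff ℝ 1 P1 := contDiff_infty.1 hP1 1
    fun_prop
  let K : ℝ → ℝ := fun s => ∫ t in (1:ℝ)..s, P t
  have hKd : ∀ s, HasDerivAt K (P s) s := fun s =>
    intervalIntegral.integral_hasDerivAt_right (hPc.continuous.intervalIntegrable _ _)
      hPc.continuous.stronglyMeasurable.stronglyMeasurableAtFilter hPc.continuous.continuousAt
  have hKd' : deriv K = P := by ext s; exact (hKd s).deriv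
  have hKc : ContDiff ℝ 2 K := by
    rw [show (2 : WithTop ℕ∞) = 1 + 1 by norm_num, contDiff_succ_iff_deriv]
    refine ⟨fun s => (hKd s).differentiableAt, by simp, ?_⟩
    rw [hKd']; exact hPc
  have hK1 : ∀ s, 1 ≤ s → K s = 0 := by
    intro s hs
    simp only [K]
    rw [intervalIntegral.integral_congr (g := fun _ => 0) (fun t ht => ?_)]
    · simp
    · rw [uIcc_of_le hs] at ht
      exact hP2 t ht.1
  have hsq : ∀ x : Eu n, 1 ≤ ‖x‖ → 1 ≤ ‖x‖ ^ 2 := fun x hx => one_le_pow₀ hx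
  have hn2 : ContDiff ℝ 2 (fun y : Eu n => ‖y‖ ^ 2) := contDiff_norm_sq ℝ
  let ρ : Eu n → ℝ := fun x => r (‖x‖ ^ 2)
  have hρc : ContDiff ℝ 2 ρ := hrc.comp hn2
  have hρ0 : ∀ x, 1 ≤ ‖x‖ → ρ x = 0 := fun x hx => hr1 _ (hsq x hx)
  have hρcs : HasCompactSupport ρ := by
    refine HasCompactSupport.intro (isCompact_closedBall 0 1) fun x hx => hρ0 x ?_
    simp at hx; exact hx.le
  have hI : 0 < ∫ x, ρ x := by
    refine hρc.continuous.integral_pos_of_hasCompactSupport_nonneg_nonzero hρcs (fun x => hr0 _)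
      (x := √s0 • ei ⟨0, hn⟩) ?_
    have : ‖(√s0 • ei ⟨0, hn⟩ : Eu n)‖ ^ 2 = s0 := by
      simp [ei, norm_smul, Real.sq_sqrt hs0.le]
    simp only [ρ, this]
    exact hrs.ne'
  have key : ∀ x : Eu n, 2 ^ n * ρ ((2:ℝ) • x) - ρ x = lapl (fun y => K (‖y‖ ^ 2)) x := by
    intro x
    rw [lapl_radial hKc, hKd']
    have hPd : deriv P (‖x‖ ^ 2) = 2 ^ n * (deriv P1 (4 * ‖x‖ ^ 2) * 4) - deriv P1 (‖x‖ ^ 2) := by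
      have h1 : HasDerivAt (fun s : ℝ => 4 * s) 4 (‖x‖ ^ 2) := by
        simpa using (hasDerivAt_id (‖x‖ ^ 2)).const_mul 4
      exact ((((hP1d _).hasDerivAt.comp _ h1).const_mul (2 ^ n)).sub (hP1d _).hasDerivAt).deriv
    have e : ‖(2:ℝ) • x‖ ^ 2 = 4 * ‖x‖ ^ 2 := by rw [norm_smul, mul_pow]; norm_num
    simp only [ρ, e, hPd, r, P]
    ring
  set I := ∫ x, ρ x
  refine ⟨I⁻¹ • ρ, I⁻¹ • fun y => K (‖y‖ ^ 2), contDiff_const.smul hρc, contDiff_const.smul (hKc.comp hn2),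
    fun x hx => by simp [hρ0 x hx], fun x hx => by simp [hK1 _ (hsq x hx)], ?_, fun x => ?_⟩
  · simp only [Pi.smul_apply, smul_eq_mul]
    rw [integral_const_mul]
    exact inv_mul_cancel₀ hI.ne'
  · rw [lapl_smul, ← key]
    simp only [Pi.smul_apply, smul_eq_mul]; ring

section
variable {n : ℕ}

/-- dyadic rescaling of a kernel -/
def sc (k : Eu n → ℝ) (j : ℕ) (x : Eu n) : ℝ := (2 ^ j) ^ n * k ((2:ℝ) ^ j • x)

/-- convolution -/
def cv (q k : Eu n → ℝ) (x : Eu n) : ℝ := ∫ y, q y * k (x - y)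

/-- kernels -/
structure Ker (k : Eu n → ℝ) : Prop where
  cd : ContDiff ℝ 1 k
  z : ∀ x, 1 < ‖x‖ → k x = 0

/-- bounded measurable -/
structure BM (q : Eu n → ℝ) (M : ℝ) : Prop where
  m : Measurable q
  b : ∀ x, |q x| ≤ M

lemma Ker.cs {k : Eu n → ℝ} (h : Ker k) : HasCompactSupport k := by
  refine HasCompactSupport.intro (isCompact_closedBall 0 1) fun x hx => h.z x ?_
  simpa using hx

lemma sc_cd {k : Eu n → ℝ} {m : ℕ∞} (h : ContDiff ℝ m k) (j : ℕ) : ContDiff ℝ m (sc k j) :=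
  contDiff_const.mul (h.comp (contDiff_const_smul _))

lemma sc_z {k : Eu n → ℝ} (h : ∀ x, 1 < ‖x‖ → k x = 0) (j : ℕ) {x : Eu n}
    (hx : (1/2:ℝ) ^ j < ‖x‖) : sc k j x = 0 := by
  have h2 : (0:ℝ) < 2 ^ j := by positivity
  have : 1 < ‖(2:ℝ) ^ j • x‖ := by
    rw [norm_smul, Real.norm_of_nonneg h2.le]
    rw [one_div, inv_pow, inv_lt_iff_one_lt_mul₀ h2] at hx
    linarith
  simp [sc, h _ this]

lemma Ker.sc {k : Eu n → ℝ} (h : Ker k) (j : ℕ) : Ker (sc k j) :=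
  ⟨sc_cd (m := 1) h.cd j, fun x hx => sc_z h.z j
    (lt_of_le_of_lt (pow_le_one₀ (by norm_num) (by norm_num)) hx)⟩

lemma pd_z {k : Eu n → ℝ} (h : ∀ x, 1 < ‖x‖ → k x = 0) (i : Fin n) :
    ∀ x, 1 < ‖x‖ → pd i k x = 0 := by
  intro x hx
  have : k =ᶠ[𝓝 x] fun _ => 0 := by
    filter_upwards [(isOpen_lt continuous_const continuous_norm).mem_nhds hx] with y hy
    exact h y hy
  simp [pd, this.fderiv_eq]

lemma pd_sc {k : Eu n → ℝ} (h : Differentiable ℝ k) (i : Fin n) (j : ℕ) :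
    pd i (sc k j) = fun x => 2 ^ j * sc (pd i k) j x := by
  ext x
  have h1 : HasFDerivAt (fun y : Eu n => (2:ℝ) ^ j • y)
      ((2:ℝ) ^ j • ContinuousLinearMap.id ℝ (Eu n)) x :=
    ((2:ℝ) ^ j • ContinuousLinearMap.id ℝ (Eu n)).hasFDerivAt
  have h2 := (((h ((2:ℝ) ^ j • x)).hasFDerivAt.comp x h1).const_mul (((2:ℝ) ^ j) ^ n)).fderiv
  simp only [pd, sc]
  rw [show sc k j = fun y => ((2:ℝ) ^ j) ^ n * (k ∘ fun y => (2:ℝ) ^ j • y) y from rfl, h2]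
  simp; ring

lemma int_sc (k : Eu n → ℝ) (j : ℕ) : ∫ x, sc k j x = ∫ x, k x := by
  simp only [sc]
  rw [integral_const_mul, Measure.integral_comp_smul]
  have : (0:ℝ) < (2 ^ j) ^ n := by positivity
  simp only [finrank_euclideanSpace, Fintype.card_fin, smul_eq_mul]
  rw [abs_of_pos (by positivity)]
  field_simp

lemma int_abs_sc (k : Eu n → ℝ) (j : ℕ) : ∫ x, |sc k j x| = ∫ x, |k x| := by
  rw [← int_sc (fun x => |k x|) j]
  refine integral_congr_ae (ae_of_all _ fun x => ?_)
  have : (0:ℝ) < (2 ^ j) ^ n := by positivity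
  simp only [sc, abs_mul, abs_of_pos this]

lemma BM.li {q : Eu n → ℝ} {M : ℝ} (h : BM q M) : LocallyIntegrable q := by
  have : MemLp q ⊤ volume := memLp_top_of_bound h.m.aestronglyMeasurable M (ae_of_all _ h.b)
  exact this.locallyIntegrable (by simp)

lemma cv_eq (q k : Eu n → ℝ) :
    cv q k = MeasureTheory.convolution q k (ContinuousLinearMap.mul ℝ ℝ) volume := by
  ext x; rfl

lemma cv_cd {q k : Eu n → ℝ} {M : ℝ} (hq : BM q M) {m : ℕ∞} (hk : ContDiff ℝ m k)
    (hc : HasCompactSupport k) : ContDiff ℝ m (cv q k) := by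
  rw [cv_eq]
  exact hc.contDiff_convolution_right _ hq.li hk

lemma pd_cv {q k : Eu n → ℝ} {M : ℝ} (hq : BM q M) (hk : ContDiff ℝ 1 k)
    (hc : HasCompactSupport k) (i : Fin n) : pd i (cv q k) = cv q (pd i k) := by
  ext x
  have := (hc.hasFDerivAt_convolution_right (ContinuousLinearMap.mul ℝ ℝ) hq.li hk x).fderiv
  rw [cv_eq, pd, this, convolution_precompR_apply (ContinuousLinearMap.mul ℝ ℝ) hq.li
    (hc.fderiv ℝ) (hk.continuous_fderiv (by norm_num)), cv_eq]
  rfl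

lemma cv_int {q k : Eu n → ℝ} {M : ℝ} (hq : BM q M) (hk : Continuous k)
    (hc : HasCompactSupport k) (x : Eu n) : Integrable (fun y => q y * k (x - y)) := by
  have h1 : Integrable (fun y => k (x - y)) :=
    (hk.integrable_of_hasCompactSupport hc).comp_sub_left x
  exact h1.bdd_mul hq.m.aestronglyMeasurable (ae_of_all _ hq.b)

lemma cv_bd {q k : Eu n → ℝ} {M : ℝ} (hq : BM q M) (hk : Continuous k)
    (hc : HasCompactSupport k) (x : Eu n) : |cv q k x| ≤ M * ∫ y, |k y| := by
  have h1 : Integrable (fun y => k (x - y)) :=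
    (hk.integrable_of_hasCompactSupport hc).comp_sub_left x
  calc |cv q k x| ≤ ∫ y, M * |k (x - y)| := by
        rw [← Real.norm_eq_abs]
        refine norm_integral_le_of_norm_le (h1.abs.const_mul M) (ae_of_all _ fun y => ?_)
        rw [Real.norm_eq_abs, abs_mul]
        exact mul_le_mul_of_nonneg_right (hq.b y) (abs_nonneg _)
    _ = M * ∫ y, |k y| := by
        rw [integral_const_mul, integral_sub_left_eq_self (fun y => |k y|)]

lemma int_pd {k : Eu n → ℝ} (h : Ker k) (i : Fin n) : ∫ x, pd i k x = 0 := by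
  have := ibp (Ω := univ) isOpen_univ (a := fun _ => 1) (fun _ _ => contDiffAt_const) h.cd h.cs
    (subset_univ _) i
  simpa [pd] using this

lemma cv_hol {q k : Eu n → ℝ} {M H : ℝ} (hq : BM q M) (hk : Continuous k)
    (hz : ∀ x, 1 < ‖x‖ → k x = 0) (h0 : ∫ x, k x = 0)
    (hH0 : 0 ≤ H) (hH : ∀ x y, |q x - q y| ≤ H * √‖x - y‖) (j : ℕ) (x : Eu n) :
    |cv q (sc k j) x| ≤ H * √((1/2) ^ j) * ∫ y, |k y| := by
  have hkc : Continuous (sc k j) := (sc_cd (m := 0) (contDiff_zero.2 hk) j).continuous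
  have hcs : HasCompactSupport (sc k j) := by
    refine HasCompactSupport.intro (isCompact_closedBall 0 ((1/2) ^ j)) fun x hx => sc_z hz j ?_
    simpa using hx
  have h1 : Integrable (fun y => sc k j (x - y)) :=
    (hkc.integrable_of_hasCompactSupport hcs).comp_sub_left x
  have e : cv q (sc k j) x = ∫ y, (q y - q x) * sc k j (x - y) := by
    simp only [sub_mul]
    rw [integral_sub (cv_int hq hkc hcs x) (h1.const_mul _), integral_const_mul,
      integral_sub_left_eq_self (sc k j), int_sc, h0]
    simp [cv]
  rw [e]
  calc |∫ y, (q y - q x) * sc k j (x - y)| ≤ ∫ y, H * √((1/2) ^ j) * |sc k j (x - y)| := by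
        rw [← Real.norm_eq_abs]
        refine norm_integral_le_of_norm_le (h1.abs.const_mul _) (ae_of_all _ fun y => ?_)
        rw [Real.norm_eq_abs, abs_mul]
        by_cases hx : (1/2:ℝ) ^ j < ‖x - y‖
        · simp [sc_z hz j hx]
        · refine mul_le_mul_of_nonneg_right ((hH y x).trans ?_) (abs_nonneg _)
          rw [norm_sub_rev]
          exact mul_le_mul_of_nonneg_left (Real.sqrt_le_sqrt (not_lt.1 hx)) hH0
    _ = H * √((1/2) ^ j) * ∫ y, |k y| := by
        rw [integral_const_mul, integral_sub_left_eq_self (fun y => |sc k j y|), int_abs_sc]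

lemma fderiv_bd {F : Eu n → ℝ} {B : ℝ} {x : Eu n}
    (hB : ∀ i, |pd i F x| ≤ B) : ‖fderiv ℝ F x‖ ≤ n * B := by
  rcases Nat.eq_zero_or_pos n with rfl | hn
  · have : fderiv ℝ F x = 0 := by
      ext v; rw [Subsingleton.elim v 0]; simp
    simp [this]
  have hB0 : 0 ≤ B := (abs_nonneg _).trans (hB ⟨0, hn⟩)
  refine ContinuousLinearMap.opNorm_le_bound _ (by positivity) fun v => ?_
  rw [fderiv_apply_eq, Real.norm_eq_abs]
  refine (Finset.abs_sum_le_sum_abs _ _).trans ?_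
  calc ∑ i, |v i * pd i F x| ≤ ∑ i : Fin n, ‖v‖ * B := by
        refine Finset.sum_le_sum fun i _ => ?_
        rw [abs_mul]
        exact mul_le_mul (PiLp.norm_apply_le v i) (hB i) (abs_nonneg _) (norm_nonneg _)
    _ = n * B * ‖v‖ := by simp; ring

lemma lip_bd {F : Eu n → ℝ} (hF : Differentiable ℝ F) {B : ℝ}
    (hB : ∀ i x, |pd i F x| ≤ B) (x y : Eu n) : |F x - F y| ≤ n * B * ‖x - y‖ :=
  Convex.norm_image_sub_le_of_norm_fderiv_le (𝕜 := ℝ) (fun z _ => hF z)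
    (fun z _ => fderiv_bd (fun i => hB i z)) convex_univ (mem_univ _) (mem_univ _)

lemma tsum_C1 {F : ℕ → Eu n → ℝ} (hF : ∀ j, ContDiff ℝ 1 (F j)) {b : ℕ → ℝ} (hb : Summable b)
    (h0 : ∀ j x, |F j x| ≤ b j) (h1 : ∀ j i x, |pd i (F j) x| ≤ b j) :
    ContDiff ℝ 1 (fun x => ∑' j, F j x) ∧
      ∀ i x, pd i (fun x => ∑' j, F j x) x = ∑' j, pd i (F j) x := by
  have hs : Summable (fun j => (n : ℝ) * b j) := hb.mul_left _
  have hd : ∀ j x, ‖fderiv ℝ (F j) x‖ ≤ n * b j := fun j x => fderiv_bd (fun i => h1 j i x)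
  have hs0 : Summable (fun j => F j 0) := Summable.of_norm_bounded hb (fun j => h0 j 0)
  have hh : ∀ x, HasFDerivAt (fun x => ∑' j, F j x) (∑' j, fderiv ℝ (F j) x) x := fun x =>
    hasFDerivAt_tsum hs (fun j x => ((hF j).differentiable (by norm_num) x).hasFDerivAt) hd hs0 x
  constructor
  · rw [contDiff_one_iff_fderiv]
    refine ⟨fun x => (hh x).differentiableAt, ?_⟩
    rw [show fderiv ℝ (fun x => ∑' j, F j x) = fun x => ∑' j, fderiv ℝ (F j) x from
      funext fun x => (hh x).fderiv]
    exact continuous_tsum (fun j => (hF j).continuous_fderiv (by norm_num)) hs hd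
  · intro i x
    rw [pd, (hh x).fderiv]
    have : Summable (fun j => fderiv ℝ (F j) x) := Summable.of_norm_bounded hs (fun j => hd j x)
    exact (ContinuousLinearMap.apply ℝ ℝ (ei i : Eu n)).map_tsum this
end

section
variable {n : ℕ}

/-- dyadic series -/
def SS (c : ℕ → ℝ) (q k : Eu n → ℝ) (x : Eu n) : ℝ := ∑' j, c j * cv q (sc k j) x

lemma BM.nonneg {q : Eu n → ℝ} {M : ℝ} (hq : BM q M) : 0 ≤ M := (abs_nonneg _).trans (hq.b 0)

lemma cv_sc_bd {q k : Eu n → ℝ} {M : ℝ} (hq : BM q M) (hk : Continuous k)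
    (hz : ∀ x, 1 < ‖x‖ → k x = 0) (j : ℕ) (x : Eu n) :
    |cv q (sc k j) x| ≤ M * ∫ y, |k y| := by
  rw [← int_abs_sc k j]
  refine cv_bd hq (sc_cd (m := 0) (contDiff_zero.2 hk) j).continuous ?_ x
  refine HasCompactSupport.intro (isCompact_closedBall 0 ((1/2) ^ j)) fun x hx => sc_z hz j ?_
  simpa using hx

lemma sqrt_half_pow (j : ℕ) : √((1/2:ℝ) ^ j) = √(1/2) ^ j := by
  rw [Real.sqrt_eq_iff_mul_self_eq (by positivity) (by positivity), ← mul_pow,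
    Real.mul_self_sqrt (by norm_num)]

lemma sqrt_half_lt : √(1/2:ℝ) < 1 := by
  rw [Real.sqrt_lt' one_pos]; norm_num

lemma summ_half : Summable (fun j : ℕ => √((1/2:ℝ) ^ j)) := by
  simp only [sqrt_half_pow]
  exact summable_geometric_of_lt_one (by positivity) sqrt_half_lt

lemma half_le (j : ℕ) : (1/2:ℝ) ^ j ≤ √((1/2:ℝ) ^ j) := by
  have h1 : (1/2:ℝ) ^ j ≤ 1 := pow_le_one₀ (by norm_num) (by norm_num)
  refine Real.le_sqrt_of_sq_le ?_
  have : (0:ℝ) < (1/2) ^ j := by positivity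
  nlinarith

lemma SS_summ {q k : Eu n → ℝ} {M : ℝ} (hq : BM q M) (hk : Continuous k)
    (hz : ∀ x, 1 < ‖x‖ → k x = 0) {c : ℕ → ℝ} (hc : ∀ j, |c j| ≤ (1/2) ^ j) (x : Eu n) :
    Summable (fun j => c j * cv q (sc k j) x) := by
  refine Summable.of_norm_bounded (g := fun j => (1/2:ℝ) ^ j * (M * ∫ y, |k y|))
    ((summable_geometric_of_lt_one (by norm_num) (by norm_num)).mul_right _) fun j => ?_
  rw [Real.norm_eq_abs, abs_mul]
  exact mul_le_mul (hc j) (cv_sc_bd hq hk hz j x) (abs_nonneg _) (by positivity)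

lemma pd_cv_sc {q k : Eu n → ℝ} {M : ℝ} (hq : BM q M) (hk : Ker k) (i : Fin n) (j : ℕ) (x : Eu n) :
    pd i (cv q (sc k j)) x = 2 ^ j * cv q (sc (pd i k) j) x := by
  rw [pd_cv hq (hk.sc j).cd (hk.sc j).cs, pd_sc (hk.cd.differentiable (by norm_num))]
  simp only [cv]
  rw [← integral_const_mul]
  refine integral_congr_ae (ae_of_all _ fun y => by simp only; ring)

lemma pd_bd {k : Eu n → ℝ} : ∃ D, 0 ≤ D ∧ ∀ i, ∫ y, |pd i k y| ≤ D :=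
  ⟨∑ i, ∫ y, |pd i k y|, Finset.sum_nonneg fun i _ => integral_nonneg fun y => abs_nonneg _,
    fun i => Finset.single_le_sum (f := fun i => ∫ y, |pd i k y|)
      (fun i _ => integral_nonneg fun y => abs_nonneg _) (Finset.mem_univ i)⟩

lemma two_half (j : ℕ) : (1/2:ℝ) ^ j * 2 ^ j = 1 := by rw [← mul_pow]; norm_num

lemma SS_hol {q k : Eu n → ℝ} {M : ℝ} (hq : BM q M) (hk : Ker k) {c : ℕ → ℝ}
    (hc : ∀ j, |c j| ≤ (1/2) ^ j) :
    ∃ C, 0 ≤ C ∧ ∀ x y, |SS c q k x - SS c q k y| ≤ C * √‖x - y‖ := by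
  obtain ⟨D, hD0, hD⟩ := pd_bd (k := k)
  have hM := hq.nonneg
  set A := M * ∫ y, |k y| with hA
  have hA0 : 0 ≤ A := mul_nonneg hM (integral_nonneg fun y => abs_nonneg _)
  set E := 2 * A + n * (M * D) with hE
  have hE0 : 0 ≤ E := by positivity
  have key : ∀ j x y, |cv q (sc k j) x - cv q (sc k j) y| ≤ E * √(2 ^ j * ‖x - y‖) := by
    intro j x y
    have b1 : |cv q (sc k j) x - cv q (sc k j) y| ≤ 2 * A := by
      have h1 := cv_sc_bd hq hk.cd.continuous hk.z j x
      have h2 := cv_sc_bd hq hk.cd.continuous hk.z j y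
      have := abs_sub (cv q (sc k j) x) (cv q (sc k j) y)
      linarith
    have b2 : |cv q (sc k j) x - cv q (sc k j) y| ≤ n * (2 ^ j * (M * D)) * ‖x - y‖ := by
      refine lip_bd ((cv_cd (m := 1) hq (hk.sc j).cd (hk.sc j).cs).differentiable (by norm_num))
        (fun i z => ?_) x y
      rw [pd_cv_sc hq hk, abs_mul, abs_of_pos (by positivity : (0:ℝ) < 2 ^ j)]
      refine mul_le_mul_of_nonneg_left ?_ (by positivity)
      refine (cv_sc_bd hq (pd_cont hk.cd i) (pd_z hk.z i) j z).trans ?_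
      exact mul_le_mul_of_nonneg_left (hD i) hM
    set t := 2 ^ j * ‖x - y‖ with ht
    have ht0 : 0 ≤ t := by positivity
    rcases le_total t 1 with h | h
    · have : t ≤ √t := Real.le_sqrt_of_sq_le (by nlinarith)
      calc _ ≤ _ := b2
        _ = n * (M * D) * t := by rw [ht]; ring
        _ ≤ E * √t := mul_le_mul (by rw [hE]; linarith) this ht0 hE0
    · have : 1 ≤ √t := Real.one_le_sqrt.2 h
      calc _ ≤ 2 * A * 1 := by linarith [b1]
        _ ≤ E * √t := mul_le_mul (by rw [hE]; have : 0 ≤ n * (M * D) := by positivity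
                                     linarith) this (by norm_num) hE0
  refine ⟨E * ∑' j : ℕ, √((1/2:ℝ) ^ j),
    mul_nonneg hE0 (tsum_nonneg fun j => Real.sqrt_nonneg _), fun x y => ?_⟩
  have hs1 := SS_summ hq hk.cd.continuous hk.z hc x
  have hs2 := SS_summ hq hk.cd.continuous hk.z hc y
  have hs : Summable (fun j : ℕ => E * √((1/2:ℝ) ^ j) * √‖x - y‖) :=
    (summ_half.mul_left E).mul_right _
  unfold SS
  rw [← hs1.tsum_sub hs2, ← tsum_mul_left, ← tsum_mul_right, ← Real.norm_eq_abs]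
  refine tsum_of_norm_bounded hs.hasSum fun j => ?_
  rw [← mul_sub, Real.norm_eq_abs, abs_mul]
  have h2 : (1/2:ℝ) ^ j * √(2 ^ j * ‖x - y‖) = √((1/2:ℝ) ^ j) * √‖x - y‖ := by
    rw [Real.sqrt_mul (by positivity), ← mul_assoc]
    congr 1
    have h3 : √((1/2:ℝ) ^ j) * √(2 ^ j) = 1 := by
      rw [← Real.sqrt_mul (by positivity), two_half]; simp
    calc (1/2:ℝ) ^ j * √(2 ^ j) = √((1/2:ℝ) ^ j) * (√((1/2:ℝ) ^ j) * √(2 ^ j)) := by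
          rw [← mul_assoc, Real.mul_self_sqrt (by positivity)]
      _ = _ := by rw [h3, mul_one]
  calc |c j| * |cv q (sc k j) x - cv q (sc k j) y| ≤ (1/2) ^ j * (E * √(2 ^ j * ‖x - y‖)) :=
        mul_le_mul (hc j) (key j x y) (abs_nonneg _) (by positivity)
    _ = E * ((1/2) ^ j * √(2 ^ j * ‖x - y‖)) := by ring
    _ = _ := by rw [h2]; ring

lemma term_cd {q k : Eu n → ℝ} {M : ℝ} (hq : BM q M) (hk : Ker k) (c : ℕ → ℝ) (j : ℕ) :
    ContDiff ℝ 1 (fun x => c j * cv q (sc k j) x) :=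
  contDiff_const.mul (cv_cd (m := 1) hq (hk.sc j).cd (hk.sc j).cs)

lemma term_pd {q k : Eu n → ℝ} {M : ℝ} (hq : BM q M) (hk : Ker k) (c : ℕ → ℝ) (j : ℕ) (i : Fin n)
    (x : Eu n) : pd i (fun x => c j * cv q (sc k j) x) x
      = c j * 2 ^ j * cv q (sc (pd i k) j) x := by
  rw [mul_assoc, ← pd_cv_sc hq hk]
  exact pd_smul (a := cv q (sc k j)) (c j) i

lemma SS_C1 {q k : Eu n → ℝ} {M : ℝ} (hq : BM q M) (hk : Ker k) {c : ℕ → ℝ}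
    (hc : ∀ j, |c j| ≤ (1/4) ^ j) : ContDiff ℝ 1 (SS c q k) ∧
      ∀ i x, pd i (SS c q k) x = SS (fun j => c j * 2 ^ j) q (pd i k) x := by
  obtain ⟨D, hD0, hD⟩ := pd_bd (k := k)
  have hM := hq.nonneg
  set A := M * ∫ y, |k y| with hA
  have hA0 : 0 ≤ A := mul_nonneg hM (integral_nonneg fun y => abs_nonneg _)
  have h42 : ∀ j : ℕ, (1/4:ℝ) ^ j * 2 ^ j = (1/2) ^ j := fun j => by rw [← mul_pow]; norm_num
  have h4 : ∀ j : ℕ, (1/4:ℝ) ^ j ≤ (1/2) ^ j := fun j => by gcongr; norm_num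
  have := tsum_C1 (F := fun j x => c j * cv q (sc k j) x) (fun j => term_cd hq hk c j)
    (b := fun j => (1/2:ℝ) ^ j * (A + M * D))
    ((summable_geometric_of_lt_one (by norm_num) (by norm_num)).mul_right _)
    (fun j x => by
      rw [abs_mul]
      refine mul_le_mul ((hc j).trans (h4 j)) ?_ (abs_nonneg _) (by positivity)
      refine (cv_sc_bd hq hk.cd.continuous hk.z j x).trans ?_
      have : 0 ≤ M * D := by positivity
      linarith)
    (fun j i x => by
      rw [term_pd hq hk, abs_mul, abs_mul, abs_of_pos (by positivity : (0:ℝ) < 2 ^ j)]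
      refine mul_le_mul ((mul_le_mul_of_nonneg_right (hc j) (by positivity)).trans (h42 j).le)
        ?_ (abs_nonneg _) (by positivity)
      refine (cv_sc_bd hq (pd_cont hk.cd i) (pd_z hk.z i) j x).trans ?_
      have := mul_le_mul_of_nonneg_left (hD i) hM
      linarith)
  refine ⟨this.1, fun i x => ?_⟩
  refine (this.2 i x).trans ?_
  unfold SS
  simp only [term_pd hq hk]

lemma SS_C1' {q k : Eu n → ℝ} {M H : ℝ} (hq : BM q M) (hk : Ker k) (hH0 : 0 ≤ H)
    (hH : ∀ x y, |q x - q y| ≤ H * √‖x - y‖) {c : ℕ → ℝ}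
    (hc : ∀ j, |c j| ≤ (1/2) ^ j) : ContDiff ℝ 1 (SS c q k) := by
  obtain ⟨D, hD0, hD⟩ := pd_bd (k := k)
  have hM := hq.nonneg
  set A := M * ∫ y, |k y| with hA
  have hA0 : 0 ≤ A := mul_nonneg hM (integral_nonneg fun y => abs_nonneg _)
  exact (tsum_C1 (F := fun j x => c j * cv q (sc k j) x) (fun j => term_cd hq hk c j)
    (b := fun j => √((1/2:ℝ) ^ j) * (A + H * D)) (summ_half.mul_right _)
    (fun j x => by
      rw [abs_mul]
      refine mul_le_mul ((hc j).trans (half_le j)) ?_ (abs_nonneg _) (by positivity)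
      refine (cv_sc_bd hq hk.cd.continuous hk.z j x).trans ?_
      have : 0 ≤ H * D := by positivity
      linarith)
    (fun j i x => by
      rw [term_pd hq hk, abs_mul, abs_mul, abs_of_pos (by positivity : (0:ℝ) < 2 ^ j)]
      have h1 : |c j| * 2 ^ j ≤ 1 :=
        (mul_le_mul_of_nonneg_right (hc j) (by positivity)).trans (two_half j).le
      have h2 := cv_hol hq (pd_cont hk.cd i) (pd_z hk.z i) (int_pd hk i) hH0 hH j x
      calc _ ≤ 1 * (H * √((1/2) ^ j) * ∫ y, |pd i k y|) :=
            mul_le_mul h1 h2 (abs_nonneg _) (by norm_num)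
        _ ≤ H * √((1/2) ^ j) * D := by
            rw [one_mul]; exact mul_le_mul_of_nonneg_left (hD i) (by positivity)
        _ ≤ _ := by
          have : 0 ≤ √((1/2:ℝ) ^ j) * A := by positivity
          nlinarith)).1
end

section
variable {n : ℕ}

/-- local Hölder condition -/
def LH (q : Eu n → ℝ) (x : Eu n) : Prop :=
  ∃ C, 0 ≤ C ∧ ∀ᶠ p : Eu n × Eu n in 𝓝 (x, x), |q p.1 - q p.2| ≤ C * √‖p.1 - p.2‖

lemma LH.of_global {q : Eu n → ℝ} (h : ∃ C, 0 ≤ C ∧ ∀ x y, |q x - q y| ≤ C * √‖x - y‖)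
    (x : Eu n) : LH q x := by
  obtain ⟨C, h0, h⟩ := h
  exact ⟨C, h0, Eventually.of_forall fun p => h _ _⟩

lemma LH.cont {q : Eu n → ℝ} {x : Eu n} (h : LH q x) : ContinuousAt q x := by
  obtain ⟨C, h0, h⟩ := h
  have h1 : Tendsto (fun y : Eu n => (y, x)) (𝓝 x) (𝓝 (x, x)) :=
    (continuous_id.prodMk continuous_const).tendsto' _ _ rfl
  have h2 : Tendsto (fun y : Eu n => C * √‖y - x‖) (𝓝 x) (𝓝 0) := by
    refine Continuous.tendsto' (by fun_prop) _ _ (by simp)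
  refine tendsto_iff_norm_sub_tendsto_zero.2 ?_
  refine squeeze_zero' (Eventually.of_forall fun y => norm_nonneg _) ?_ h2
  exact h1.eventually h

lemma ev_fst {x : Eu n} {P : Eu n → Prop} (h : ∀ᶠ y in 𝓝 x, P y) :
    ∀ᶠ p : Eu n × Eu n in 𝓝 (x, x), P p.1 ∧ P p.2 :=
  ((continuous_fst.tendsto (x, x)).eventually h).and ((continuous_snd.tendsto (x, x)).eventually h)

lemma LH.congr {q r : Eu n → ℝ} {x : Eu n} (h : LH q x) (he : r =ᶠ[𝓝 x] q) : LH r x := by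
  obtain ⟨C, h0, h⟩ := h
  refine ⟨C, h0, ?_⟩
  filter_upwards [h, ev_fst he] with p hp ⟨h1, h2⟩
  rwa [h1, h2]

lemma LH.add {q r : Eu n → ℝ} {x : Eu n} (h : LH q x) (h' : LH r x) :
    LH (fun y => q y + r y) x := by
  obtain ⟨C, h0, h⟩ := h
  obtain ⟨D, h0', h'⟩ := h'
  refine ⟨C + D, add_nonneg h0 h0', ?_⟩
  filter_upwards [h, h'] with p hp hp'
  calc |q p.1 + r p.1 - (q p.2 + r p.2)| = |(q p.1 - q p.2) + (r p.1 - r p.2)| := by ring_nf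
    _ ≤ _ := abs_add_le _ _
    _ ≤ _ := by rw [add_mul]; linarith

lemma LH.const (c : ℝ) (x : Eu n) : LH (fun _ => c) x :=
  ⟨0, le_rfl, Eventually.of_forall fun p => by simp⟩

lemma LH.mul {q r : Eu n → ℝ} {x : Eu n} (h : LH q x) (h' : LH r x) :
    LH (fun y => q y * r y) x := by
  have bd : ∀ {q : Eu n → ℝ}, LH q x → ∀ᶠ y in 𝓝 x, |q y| ≤ |q x| + 1 := by
    intro q h
    have := h.cont.abs.eventually (gt_mem_nhds (lt_add_one |q x|))
    filter_upwards [this] with y hy using hy.le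
  have b1 := bd h
  have b2 := bd h'
  obtain ⟨C, h0, h⟩ := h
  obtain ⟨D, h0', h'⟩ := h'
  refine ⟨(|q x| + 1) * D + (|r x| + 1) * C, by positivity, ?_⟩
  filter_upwards [h, h', ev_fst b1, ev_fst b2] with p hp hp' ⟨c1, _⟩ ⟨_, c2⟩
  calc |q p.1 * r p.1 - (q p.2 * r p.2)|
      = |q p.1 * (r p.1 - r p.2) + r p.2 * (q p.1 - q p.2)| := by ring_nf
    _ ≤ _ := abs_add_le _ _
    _ = |q p.1| * |r p.1 - r p.2| + |r p.2| * |q p.1 - q p.2| := by rw [abs_mul, abs_mul]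
    _ ≤ (|q x| + 1) * (D * √‖p.1 - p.2‖) + (|r x| + 1) * (C * √‖p.1 - p.2‖) := by gcongr
    _ = _ := by ring

lemma LH.sub {q r : Eu n → ℝ} {x : Eu n} (h : LH q x) (h' : LH r x) :
    LH (fun y => q y - r y) x :=
  (h.add ((LH.const (-1) x).mul h')).congr (Eventually.of_forall fun y => by simp only; ring)

lemma LH.sum {ι : Type*} (s : Finset ι) {q : ι → Eu n → ℝ} {x : Eu n} (h : ∀ i, LH (q i) x) :
    LH (fun y => ∑ i ∈ s, q i y) x := by
  classical
  induction s using Finset.induction_on with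
  | empty => simpa using LH.const 0 x
  | insert a s ha ih => simpa [Finset.sum_insert ha] using (h a).add ih

lemma LH.of_cd {q : Eu n → ℝ} {x : Eu n} (h : ContDiffAt ℝ 1 q x) : LH q x := by
  obtain ⟨K, t, ht, hK⟩ := h.exists_lipschitzOnWith
  refine ⟨K, K.2, ?_⟩
  have h1 : ∀ᶠ y in 𝓝 x, dist y x < 1 / 2 := Metric.ball_mem_nhds x (by norm_num)
  filter_upwards [ev_fst ht, ev_fst h1] with p ⟨a, b⟩ ⟨c, d⟩
  have e := hK.dist_le_mul _ a _ b
  rw [Real.dist_eq, dist_eq_norm] at e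
  refine e.trans (mul_le_mul_of_nonneg_left ?_ K.2)
  have f : ‖p.1 - p.2‖ ≤ 1 := by
    rw [← dist_eq_norm]; have := dist_triangle_right p.1 p.2 x; linarith
  exact Real.le_sqrt_of_sq_le (by nlinarith [norm_nonneg (p.1 - p.2)])

lemma LH.comp {G : ℝ → ℝ} {q : Eu n → ℝ} {x : Eu n} (hG : ContDiff ℝ 1 G) (h : LH q x) :
    LH (fun y => G (q y)) x := by
  obtain ⟨K, t, ht, hK⟩ := (hG.contDiffAt (x := q x)).exists_lipschitzOnWith
  have hc := h.cont.eventually ht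
  obtain ⟨C, h0, h⟩ := h
  refine ⟨K * C, mul_nonneg K.2 h0, ?_⟩
  filter_upwards [ev_fst hc, h] with p ⟨a, b⟩ hp
  have e := hK.dist_le_mul _ a _ b
  rw [Real.dist_eq, Real.dist_eq] at e
  refine e.trans ?_
  rw [mul_assoc]
  exact mul_le_mul_of_nonneg_left hp K.2

lemma LH.global {q : Eu n → ℝ} {M : ℝ} (hM : ∀ x, |q x| ≤ M) (hc : HasCompactSupport q)
    (h : ∀ x, LH q x) : ∃ C, 0 ≤ C ∧ ∀ x y, |q x - q y| ≤ C * √‖x - y‖ := by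
  have hM0 : 0 ≤ M := (abs_nonneg _).trans (hM 0)
  have key : ∃ C, 0 ≤ C ∧ ∃ δ > 0, ∀ y ∈ tsupport q, ∀ z, ‖y - z‖ < δ →
      |q y - q z| ≤ C * √‖y - z‖ := by
    refine hc.isCompact.induction_on (p := fun s => ∃ C, 0 ≤ C ∧ ∃ δ > 0, ∀ y ∈ s, ∀ z,
      ‖y - z‖ < δ → |q y - q z| ≤ C * √‖y - z‖) ⟨0, le_rfl, 1, one_pos, by simp⟩ ?_ ?_ ?_
    · rintro s t hst ⟨C, h0, δ, hδ, h⟩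
      exact ⟨C, h0, δ, hδ, fun y hy => h y (hst hy)⟩
    · rintro s t ⟨C, h0, δ, hδ, h⟩ ⟨C', h0', δ', hδ', h'⟩
      refine ⟨C + C', by positivity, min δ δ', lt_min hδ hδ', ?_⟩
      rintro y (hy | hy) z hz
      · refine (h y hy z (hz.trans_le (min_le_left _ _))).trans ?_
        gcongr; linarith
      · refine (h' y hy z (hz.trans_le (min_le_right _ _))).trans ?_
        gcongr; linarith
    · intro x _
      obtain ⟨C, h0, h⟩ := h x
      obtain ⟨ε, hε, he⟩ := Metric.eventually_nhds_iff.1 h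
      refine ⟨Metric.ball x (ε / 2), mem_nhdsWithin_of_mem_nhds (Metric.ball_mem_nhds _ (by linarith)),
        C, h0, ε / 2, by linarith, fun y hy z hz => ?_⟩
      refine he (y := (y, z)) ?_
      rw [Metric.mem_ball] at hy
      rw [← dist_eq_norm] at hz
      rw [Prod.dist_eq, max_lt_iff]
      refine ⟨by simp only; linarith, ?_⟩
      have := dist_triangle_left z x y
      simp only; linarith
  obtain ⟨C, h0, δ, hδ, hk⟩ := key
  have hsδ : 0 < √δ := Real.sqrt_pos.2 hδ
  refine ⟨C + 2 * M / √δ, by positivity, fun x y => ?_⟩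
  rcases lt_or_ge ‖x - y‖ δ with hlt | hge
  · have : |q x - q y| ≤ C * √‖x - y‖ := by
      by_cases hx : x ∈ tsupport q
      · exact hk x hx y hlt
      by_cases hy : y ∈ tsupport q
      · rw [abs_sub_comm, norm_sub_rev]; exact hk y hy x (by rwa [norm_sub_rev])
      · rw [image_eq_zero_of_notMem_tsupport hx, image_eq_zero_of_notMem_tsupport hy]
        simp; positivity
    refine this.trans ?_
    gcongr
    have : 0 ≤ 2 * M / √δ := by positivity
    linarith
  · have h1 : √δ ≤ √‖x - y‖ := Real.sqrt_le_sqrt hge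
    calc |q x - q y| ≤ 2 * M := by
          have := abs_sub (q x) (q y); have := hM x; have := hM y; linarith
      _ = 2 * M / √δ * √δ := by field_simp
      _ ≤ (C + 2 * M / √δ) * √‖x - y‖ := by gcongr; linarith
end

section
variable {n : ℕ}

lemma leb {v ρ : Eu n → ℝ} {M : ℝ} (hv : BM v M) (hρ : Continuous ρ)
    (hz : ∀ x, 1 < ‖x‖ → ρ x = 0) (h1 : ∫ x, ρ x = 1) :
    ∀ᵐ x, Tendsto (fun N => cv v (sc ρ N) x) atTop (𝓝 (v x)) := by
  obtain ⟨B, hB⟩ : ∃ B, ∀ x, ‖ρ x‖ ≤ B := hρ.bounded_above_of_compact_support <|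
    HasCompactSupport.intro (isCompact_closedBall 0 1) fun x hx => hz x (by simpa using hx)
  filter_upwards [(Besicovitch.vitaliFamily (volume : Measure (Eu n))).ae_tendsto_average_norm_sub
    hv.li] with x h₀
  have hδ : Tendsto (fun N : ℕ => (1/2:ℝ) ^ N) atTop (𝓝[>] 0) :=
    tendsto_nhdsWithin_iff.2 ⟨tendsto_pow_atTop_nhds_zero_of_lt_one (by norm_num) (by norm_num),
      Eventually.of_forall fun N => by simp⟩
  have := (h₀.comp (Besicovitch.tendsto_filterAt volume x)).comp hδ
  have h2 : Tendsto (fun N => ∫ y, sc ρ N (x - y) • v y) atTop (𝓝 (v x)) := by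
    refine tendsto_integral_smul_of_tendsto_average_norm_sub
      (B * volume.real (Metric.closedBall (0 : Eu n) 1)) this ?_ ?_ ?_ ?_
    · filter_upwards with i using hv.li.integrableOn_isCompact (isCompact_closedBall _ _)
    · apply tendsto_const_nhds.congr (fun i ↦ ?_)
      rw [integral_sub_left_eq_self, int_sc, h1]
    · filter_upwards with i
      intro y hy
      by_contra hc
      refine hy (sc_z hz i ?_)
      rw [Metric.mem_closedBall, dist_eq_norm_sub'] at hc
      exact not_le.1 hc
    · filter_upwards with i y
      have hp : (0:ℝ) < (2 ^ i) ^ n := by positivity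
      have hV : 0 < volume.real (Metric.closedBall (0 : Eu n) 1) :=
        ENNReal.toReal_pos (Metric.measure_closedBall_pos _ _ one_pos).ne'
          measure_closedBall_lt_top.ne
      rw [Measure.addHaar_real_closedBall' _ x (r := (1/2) ^ i) (by positivity)]
      simp only [sc, finrank_euclideanSpace, Fintype.card_fin]
      rw [abs_mul, abs_of_pos hp, one_div, inv_pow, inv_pow]
      rw [le_div_iff₀ (by positivity)]
      have hb := hB ((2:ℝ) ^ i • (x - y))
      rw [Real.norm_eq_abs] at hb
      calc _ = |ρ ((2:ℝ) ^ i • (x - y))| * volume.real (Metric.closedBall (0 : Eu n) 1) := by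
            field_simp
        _ ≤ _ := by gcongr
  refine h2.congr fun N => ?_
  simp only [cv, smul_eq_mul, mul_comm]
end

section
variable {n : ℕ} {Ω : Set (Eu n)} {u : Eu n → Eu n}

lemma BM.int {q b : Eu n → ℝ} {M : ℝ} (hq : BM q M) (hb : Continuous b)
    (hc : HasCompactSupport b) : Integrable (fun y => q y * b y) :=
  (hb.integrable_of_hasCompactSupport hc).bdd_mul hq.m.aestronglyMeasurable (ae_of_all _ hq.b)

lemma Tst.mulc {ζ : Eu n → ℝ} (h : Tst Ω ζ) (hΩ : IsOpen Ω) {a : Eu n → ℝ}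
    (ha : ContinuousOn a Ω) :
    Continuous (fun y => a y * ζ y) ∧ HasCompactSupport (fun y => a y * ζ y) :=
  ⟨cont_mul_supp hΩ ha h.cd.continuous h.ts, h.cs.mul_left⟩

lemma Tst.mulp {ζ : Eu n → ℝ} (h : Tst Ω ζ) (hΩ : IsOpen Ω) {a : Eu n → ℝ}
    (ha : ContinuousOn a Ω) (i : Fin n) :
    Continuous (fun y => a y * pd i ζ y) ∧ HasCompactSupport (fun y => a y * pd i ζ y) :=
  ⟨cont_mul_supp hΩ ha (h.pd_cd i).continuous ((pd_tsupport ζ i).trans h.ts),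
    (pd_compact h.cs i).mul_left⟩

lemma Tst.lap_int {ζ v : Eu n → ℝ} {M : ℝ} (h : Tst Ω ζ) (hv : BM v M) :
    Integrable (fun y => v y * lapl ζ y) :=
  hv.int (lapl_cont h.cd) (h.cs.mono' ((subset_tsupport _).trans lapl_supp))

lemma wk1 (hΩ : IsOpen Ω) (hu : ∀ x ∈ Ω, ContDiffAt ℝ 1 u x) {v f : Eu n → ℝ} {M M' : ℝ}
    (hv : BM v M) (hf : BM f M') (hw : Wk Ω u v f) {ζ : Eu n → ℝ} (h : Tst Ω ζ) :
    ∫ y, v y * lapl ζ y =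
      -(∫ y, (f y + v y * dvg u y) * ζ y) - ∑ i, ∫ y, (v y * u y i) * pd i ζ y := by
  have e := hw ζ h
  have i1 := h.lap_int hv
  have c2 := h.mulc hΩ (dvg_contOn hu)
  have i2 := hv.int c2.1 c2.2
  have i3 : ∀ i ∈ (Finset.univ : Finset (Fin n)),
      Integrable (fun y => v y * (u y i * pd i ζ y)) := fun i _ =>
    hv.int (h.mulp hΩ (comp_contOn hu i) i).1 (h.mulp hΩ (comp_contOn hu i) i).2
  have i4 := hf.int h.cd.continuous h.cs
  have e1 : ∫ y, v y * adj u ζ y = -(∫ y, v y * lapl ζ y) - ((∫ y, v y * (dvg u y * ζ y)) +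
      ∑ i, ∫ y, v y * (u y i * pd i ζ y)) := by
    rw [← integral_finsetSum _ i3, ← integral_add i2 (integrable_finsetSum _ i3),
      ← integral_neg]
    refine Eq.trans ?_ (integral_sub i1.neg (i2.add (integrable_finsetSum _ i3)))
    refine integral_congr_ae (ae_of_all _ fun y => ?_)
    simp only [adj, Pi.neg_apply, Pi.add_apply, ← Finset.mul_sum]
    ring
  have e2 : ∫ y, (f y + v y * dvg u y) * ζ y =
      (∫ y, f y * ζ y) + ∫ y, v y * (dvg u y * ζ y) := by
    rw [← integral_add i4 i2]
    refine integral_congr_ae (ae_of_all _ fun y => ?_)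
    simp only; ring
  simp_rw [mul_assoc]
  rw [e2]
  linarith

lemma wk2 (hΩ : IsOpen Ω) (hu : ∀ x ∈ Ω, ContDiffAt ℝ 1 u x) {v f : Eu n → ℝ} {M M' : ℝ}
    (hv : BM v M) (hf : BM f M') (hw : Wk Ω u v f) (hv1 : ∀ x ∈ Ω, ContDiffAt ℝ 1 v x)
    {ζ : Eu n → ℝ} (h : Tst Ω ζ) :
    ∫ y, v y * lapl ζ y = -(∫ y, (f y - ∑ i, u y i * pd i v y) * ζ y) := by
  have e := hw ζ h
  have i1 := h.lap_int hv
  have i2 : Integrable (fun y => v y * adj u ζ y) := hv.int (adj_cont hΩ hu h) (adj_cs h)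
  have e0 := int_drift hΩ hu hv1 h
  have c3 := h.mulc hΩ (grad_contOn hu hv1)
  have i3 := c3.1.integrable_of_hasCompactSupport c3.2 (μ := volume)
  have i4 := hf.int h.cd.continuous h.cs
  have e1 : ∫ y, v y * adj u ζ y + v y * lapl ζ y =
      - ∫ x, v x * (dvg u x * ζ x + ∑ i, u x i * pd i ζ x) := by
    rw [← integral_neg]
    refine integral_congr_ae (ae_of_all _ fun y => ?_)
    simp only [adj]; ring
  rw [integral_add i2 i1] at e1
  have e2 : ∫ y, (f y - ∑ i, u y i * pd i v y) * ζ y =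
      (∫ y, f y * ζ y) - ∫ y, (∑ i, u y i * pd i v y) * ζ y := by
    rw [← integral_sub i4 i3]
    refine integral_congr_ae (ae_of_all _ fun y => ?_)
    simp only; ring
  rw [e2]
  linarith

lemma pd_refl {k : Eu n → ℝ} (hk : Differentiable ℝ k) (i : Fin n) (x : Eu n) :
    pd i (fun y => k (x - y)) = fun y => - pd i k (x - y) := by
  ext y
  have h1 : HasFDerivAt (fun y : Eu n => x - y) (-ContinuousLinearMap.id ℝ (Eu n)) y :=
    (hasFDerivAt_id y).const_sub x
  have h2 := ((hk (x - y)).hasFDerivAt.comp y h1).fderiv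
  simp only [pd]
  rw [show (fun y => k (x - y)) = k ∘ (fun y => x - y) from rfl, h2]
  simp

lemma lapl_refl {k : Eu n → ℝ} (hk : ContDiff ℝ 2 k) (x y : Eu n) :
    lapl (fun y => k (x - y)) y = lapl k (x - y) := by
  rw [lapl_eq, lapl_eq]
  refine Finset.sum_congr rfl fun i _ => ?_
  rw [pd_refl (hk.differentiable (by norm_num))]
  have h := pd_contDiff (k := 2) (m := 1) hk (by norm_num) i
  have h2 := congrFun (pd_refl (h.differentiable (by norm_num)) i x) y
  have h3 := pd_smul (a := fun y => pd i k (x - y)) (-1) i (x := y)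
  have h4 : (fun y => -pd i k (x - y)) = (-1:ℝ) • (fun y => pd i k (x - y)) := by
    ext; simp
  rw [h4, h3, h2]; ring

lemma lapl_sc {k : Eu n → ℝ} (hk : ContDiff ℝ 2 k) (j : ℕ) (x : Eu n) :
    lapl (sc k j) x = 4 ^ j * sc (lapl k) j x := by
  have h : ∀ i, pd i (pd i (sc k j)) x = 4 ^ j * sc (pd i (pd i k)) j x := by
    intro i
    rw [pd_sc (hk.differentiable (by norm_num))]
    have h := pd_contDiff (k := 2) (m := 1) hk (by norm_num) i
    have h3 := pd_smul (a := sc (pd i k) j) (2 ^ j) i (x := x)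
    have h4 : (fun x => 2 ^ j * sc (pd i k) j x) = (2 ^ j : ℝ) • (sc (pd i k) j) := by
      ext; simp
    rw [h4, h3, pd_sc (h.differentiable (by norm_num)), ← mul_assoc, ← mul_pow]
    norm_num
  rw [lapl_eq]
  simp_rw [h]
  simp only [sc, lapl_eq, Finset.mul_sum]

lemma tst_sc {k : Eu n → ℝ} (hk : ContDiff ℝ 2 k) (hz : ∀ x, 1 < ‖x‖ → k x = 0) {x : Eu n} {j : ℕ}
    (hx : Metric.closedBall x ((1/2) ^ j) ⊆ Ω) : Tst Ω (fun y => sc k j (x - y)) := by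
  have hs : ∀ y ∉ Metric.closedBall x ((1/2) ^ j), sc k j (x - y) = 0 := by
    intro y hy
    refine sc_z hz j ?_
    rw [Metric.mem_closedBall, dist_eq_norm_sub'] at hy
    exact not_le.1 hy
  refine ⟨(sc_cd (m := 2) hk j).comp (contDiff_const.sub contDiff_id),
    HasCompactSupport.intro (isCompact_closedBall x _) hs, ?_⟩
  refine (closure_minimal ?_ Metric.isClosed_closedBall).trans hx
  intro y hy
  by_contra h
  exact hy (hs y h)

/-- coefficients -/
def c0 (m j : ℕ) : ℝ := if m ≤ j then -(1/4) ^ j else 0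
/-- coefficients -/
def c1 (m j : ℕ) : ℝ := if m ≤ j then (1/2) ^ j else 0

lemma c0_bd (m j : ℕ) : |c0 m j| ≤ (1/4) ^ j := by
  unfold c0; split_ifs <;> simp
lemma c1_bd (m j : ℕ) : |c1 m j| ≤ (1/2) ^ j := by
  unfold c1; split_ifs <;> simp
lemma c0_bd' (m j : ℕ) : |c0 m j| ≤ (1/2) ^ j :=
  (c0_bd m j).trans (by gcongr; norm_num)
lemma c0_bd2 (m j : ℕ) : |c0 m j * 2 ^ j| ≤ (1/2) ^ j := by
  rw [abs_mul, abs_of_pos (by positivity : (0:ℝ) < 2 ^ j)]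
  calc _ ≤ (1/4:ℝ) ^ j * 2 ^ j := by gcongr; exact c0_bd m j
    _ = _ := by rw [← mul_pow]; norm_num

lemma tele {ρ Θ v q0 : Eu n → ℝ} {q : Fin n → Eu n → ℝ} {M M0 : ℝ} {M1 : Fin n → ℝ}
    (hρ : Ker ρ) (hΘ : ContDiff ℝ 2 Θ) (hΘz : ∀ x, 1 < ‖x‖ → Θ x = 0)
    (hid : ∀ x, 2 ^ n * ρ ((2:ℝ) • x) - ρ x = lapl Θ x)
    (hv : BM v M) (hq0 : BM q0 M0) (hq : ∀ i, BM (q i) (M1 i)) {m : ℕ} {x : Eu n}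
    (h : ∀ j, m ≤ j → cv v (sc (lapl Θ) j) x = c0 m j * cv q0 (sc Θ j) x
      + ∑ i, c1 m j * cv (q i) (sc (pd i Θ) j) x) :
    Tendsto (fun N => cv v (sc ρ N) x) atTop (𝓝 (cv v (sc ρ m) x + (SS (c0 m) q0 Θ x
      + ∑ i, SS (c1 m) (q i) (pd i Θ) x))) := by
  have hd : ∀ j, cv v (sc ρ (j + 1)) x - cv v (sc ρ j) x = cv v (sc (lapl Θ) j) x := by
    intro j
    unfold cv
    rw [← integral_sub (cv_int hv (hρ.sc _).cd.continuous (hρ.sc _).cs x)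
      (cv_int hv (hρ.sc _).cd.continuous (hρ.sc _).cs x)]
    refine integral_congr_ae (ae_of_all _ fun y => ?_)
    simp only [sc]
    rw [← hid, smul_smul, ← pow_succ']
    ring
  set T : ℕ → ℝ := fun j => c0 m j * cv q0 (sc Θ j) x
      + ∑ i, c1 m j * cv (q i) (sc (pd i Θ) j) x with hT
  have hpart : ∀ N, m ≤ N → cv v (sc ρ N) x = cv v (sc ρ m) x + ∑ j ∈ Finset.range N, T j := by
    intro N hN
    induction N, hN using Nat.le_induction with
    | base =>
      have : ∑ j ∈ Finset.range m, T j = 0 := by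
        refine Finset.sum_eq_zero fun j hj => ?_
        have := Finset.mem_range.1 hj
        simp [hT, c0, c1, not_le.2 this]
      rw [this, add_zero]
    | succ N hN ih =>
      rw [Finset.sum_range_succ, ← add_assoc, ← ih]
      have h1 := hd N
      rw [h N hN] at h1
      simp only [hT]
      linarith
  have hs : HasSum T (SS (c0 m) q0 Θ x + ∑ i, SS (c1 m) (q i) (pd i Θ) x) := by
    refine HasSum.add ?_ (hasSum_sum fun i _ => ?_)
    · exact (SS_summ hq0 hΘ.continuous hΘz (c0_bd' m) x).hasSum
    · exact (SS_summ (hq i) (pd_cont (hΘ.of_le (by norm_num)) i) (pd_z hΘz i) (c1_bd m) x).hasSum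
  refine (hs.tendsto_sum_nat.const_add (cv v (sc ρ m) x)).congr' ?_
  filter_upwards [eventually_ge_atTop m] with N hN
  exact (hpart N hN).symm

lemma cv_congr {q r k : Eu n → ℝ} {x : Eu n} (h : ∀ y, k (x - y) ≠ 0 → q y = r y) :
    cv q k x = cv r k x := by
  refine integral_congr_ae (ae_of_all _ fun y => ?_)
  by_cases h0 : k (x - y) = 0
  · simp [h0]
  · simp [h y h0]

lemma sc_near {k : Eu n → ℝ} (hz : ∀ x, 1 < ‖x‖ → k x = 0) {j m : ℕ} (hj : m ≤ j) {R : ℝ}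
    (hR : (1/2:ℝ) ^ m ≤ R) {x y : Eu n} (h : sc k j (x - y) ≠ 0) : y ∈ Metric.closedBall x R := by
  by_contra hy
  refine h (sc_z hz j ?_)
  rw [Metric.mem_closedBall, dist_eq_norm_sub', not_le] at hy
  exact ((pow_le_pow_of_le_one (by norm_num) (by norm_num) hj).trans hR).trans_lt hy

lemma id1 (hΩ : IsOpen Ω) (hu : ∀ x ∈ Ω, ContDiffAt ℝ 1 u x) {v f Θ χ : Eu n → ℝ} {M M' : ℝ}
    (hv : BM v M) (hf : BM f M') (hw : Wk Ω u v f)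
    (hΘ : ContDiff ℝ 2 Θ) (hΘz : ∀ x, 1 < ‖x‖ → Θ x = 0) {x : Eu n} {R : ℝ}
    (hxR : Metric.closedBall x R ⊆ Ω) (hχ : ∀ y ∈ Metric.closedBall x R, χ y = 1)
    {m j : ℕ} (hm : (1/2:ℝ) ^ m ≤ R) (hj : m ≤ j) :
    cv v (sc (lapl Θ) j) x = c0 m j * cv (fun y => χ y * f y + dvg u y * χ y * v y) (sc Θ j) x
      + ∑ i, c1 m j * cv (fun y => u y i * χ y * v y) (sc (pd i Θ) j) x := by
  have ht : Tst Ω (fun y => sc Θ j (x - y)) := tst_sc hΘ hΘz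
    ((Metric.closedBall_subset_closedBall
      ((pow_le_pow_of_le_one (by norm_num) (by norm_num) hj).trans hm)).trans hxR)
  have e := wk1 hΩ hu hv hf hw ht
  have hd := (sc_cd (m := 2) hΘ j).differentiable (by norm_num)
  have a1 : ∫ y, v y * lapl (fun y => sc Θ j (x - y)) y = 4 ^ j * cv v (sc (lapl Θ) j) x := by
    unfold cv
    rw [← integral_const_mul]
    refine integral_congr_ae (ae_of_all _ fun y => ?_)
    simp only
    rw [lapl_refl (sc_cd (m := 2) hΘ j), lapl_sc hΘ]; ring
  have a2 : ∀ i, ∫ y, (v y * u y i) * pd i (fun y => sc Θ j (x - y)) y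
      = - (2 ^ j * cv (fun y => u y i * χ y * v y) (sc (pd i Θ) j) x) := by
    intro i
    rw [cv_congr (r := fun y => v y * u y i) fun y hy => by
      rw [hχ y (sc_near (pd_z hΘz i) hj hm hy)]; ring]
    unfold cv
    rw [← integral_const_mul, ← integral_neg]
    refine integral_congr_ae (ae_of_all _ fun y => ?_)
    simp only
    rw [pd_refl hd, pd_sc (hΘ.differentiable (by norm_num))]; ring
  have a3 : ∫ y, (f y + v y * dvg u y) * sc Θ j (x - y) =
      cv (fun y => χ y * f y + dvg u y * χ y * v y) (sc Θ j) x := by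
    rw [cv_congr (r := fun y => f y + v y * dvg u y) fun y hy => by
      rw [hχ y (sc_near hΘz hj hm hy)]; ring]
    rfl
  rw [a1, a3] at e
  simp_rw [a2] at e
  have h4 : (1/4:ℝ) ^ j * 4 ^ j = 1 := by rw [← mul_pow]; norm_num
  have h42 : (1/4:ℝ) ^ j * 2 ^ j = (1/2) ^ j := by rw [← mul_pow]; norm_num
  have e' := congrArg (fun t => (1/4:ℝ) ^ j * t) e
  simp only [← mul_assoc, h4, mul_sub, Finset.mul_sum, mul_neg, h42] at e'
  simp only [c0, c1, hj, if_true]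
  rw [one_mul] at e'
  rw [e']
  simp [Finset.sum_neg_distrib]

lemma id2 (hΩ : IsOpen Ω) (hu : ∀ x ∈ Ω, ContDiffAt ℝ 1 u x) {v f Θ χ : Eu n → ℝ} {M M' : ℝ}
    (hv : BM v M) (hf : BM f M') (hw : Wk Ω u v f) (hv1 : ∀ x ∈ Ω, ContDiffAt ℝ 1 v x)
    (hΘ : ContDiff ℝ 2 Θ) (hΘz : ∀ x, 1 < ‖x‖ → Θ x = 0) {x : Eu n} {R : ℝ}
    (hxR : Metric.closedBall x R ⊆ Ω) (hχ : ∀ y ∈ Metric.closedBall x R, χ y = 1)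
    {m j : ℕ} (hm : (1/2:ℝ) ^ m ≤ R) (hj : m ≤ j) :
    cv v (sc (lapl Θ) j) x =
      c0 m j * cv (fun y => (f y - ∑ i, u y i * pd i v y) * χ y) (sc Θ j) x := by
  have ht : Tst Ω (fun y => sc Θ j (x - y)) := tst_sc hΘ hΘz
    ((Metric.closedBall_subset_closedBall
      ((pow_le_pow_of_le_one (by norm_num) (by norm_num) hj).trans hm)).trans hxR)
  have e := wk2 hΩ hu hv hf hw hv1 ht
  have a1 : ∫ y, v y * lapl (fun y => sc Θ j (x - y)) y = 4 ^ j * cv v (sc (lapl Θ) j) x := by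
    unfold cv
    rw [← integral_const_mul]
    refine integral_congr_ae (ae_of_all _ fun y => ?_)
    simp only
    rw [lapl_refl (sc_cd (m := 2) hΘ j), lapl_sc hΘ]; ring
  have a3 : ∫ y, (f y - ∑ i, u y i * pd i v y) * sc Θ j (x - y) =
      cv (fun y => (f y - ∑ i, u y i * pd i v y) * χ y) (sc Θ j) x := by
    rw [cv_congr (r := fun y => f y - ∑ i, u y i * pd i v y) fun y hy => by
      rw [hχ y (sc_near hΘz hj hm hy)]; ring]
    rfl
  rw [a1, a3] at e
  have h4 : (1/4:ℝ) ^ j * 4 ^ j = 1 := by rw [← mul_pow]; norm_num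
  have e' := congrArg (fun t => (1/4:ℝ) ^ j * t) e
  simp only [← mul_assoc, h4] at e'
  simp only [c0, hj, if_true]
  linarith
end

section
variable {n : ℕ} {Ω : Set (Eu n)} {u : Eu n → Eu n}

/-- cutoff data at a point -/
structure Cut (Ω : Set (Eu n)) (x0 : Eu n) (χ : Eu n → ℝ) (R : ℝ) (m : ℕ) : Prop where
  cd : ContDiff ℝ 1 χ
  cs : HasCompactSupport χ
  ts : tsupport χ ⊆ Ω
  hR : 0 < R
  hm : (1/2:ℝ) ^ m ≤ R
  hb : ∀ x ∈ Metric.ball x0 R, Metric.closedBall x R ⊆ Ω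
  h1 : ∀ x ∈ Metric.ball x0 R, ∀ y ∈ Metric.closedBall x R, χ y = 1

lemma exists_cut (hΩ : IsOpen Ω) {x0 : Eu n} (hx : x0 ∈ Ω) : ∃ χ R m, Cut Ω x0 χ R m := by
  obtain ⟨ε, hε, hb⟩ := Metric.isOpen_iff.1 hΩ x0 hx
  obtain ⟨m, hm⟩ := exists_pow_lt_of_lt_one (show (0:ℝ) < ε / 4 by linarith)
    (show (1/2:ℝ) < 1 by norm_num)
  let f : ContDiffBump x0 := ⟨2 * (ε / 4), 3 * (ε / 4), by linarith, by linarith⟩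
  have hsub : ∀ x ∈ Metric.ball x0 (ε / 4), Metric.closedBall x (ε / 4) ⊆
      Metric.closedBall x0 (2 * (ε / 4)) := by
    intro x hx
    refine Metric.closedBall_subset_closedBall' ?_
    rw [Metric.mem_ball] at hx
    linarith
  refine ⟨f, ε / 4, m, f.contDiff, f.hasCompactSupport, ?_, by linarith, hm.le, ?_, ?_⟩
  · rw [f.tsupport_eq]
    exact (Metric.closedBall_subset_ball (show 3 * (ε / 4) < ε by linarith)).trans hb
  · exact fun x hx => (hsub x hx).trans
      ((Metric.closedBall_subset_ball (by linarith)).trans hb)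
  · exact fun x hx y hy => f.one_of_mem_closedBall (hsub x hx hy)

lemma BM.of_cont {b : Eu n → ℝ} (hb : Continuous b) (hc : HasCompactSupport b) : ∃ M, BM b M := by
  obtain ⟨B, hB⟩ := hb.bounded_above_of_compact_support hc
  exact ⟨B, hb.measurable, hB⟩

lemma BM.mul {a b : Eu n → ℝ} {A B : ℝ} (ha : BM a A) (hb : BM b B) :
    BM (fun y => a y * b y) (A * B) :=
  ⟨ha.m.mul hb.m, fun x => by
    rw [abs_mul]; exact mul_le_mul (ha.b x) (hb.b x) (abs_nonneg _) ha.nonneg⟩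

lemma BM.add {a b : Eu n → ℝ} {A B : ℝ} (ha : BM a A) (hb : BM b B) :
    BM (fun y => a y + b y) (A + B) :=
  ⟨ha.m.add hb.m, fun x => (abs_add_le _ _).trans (add_le_add (ha.b x) (hb.b x))⟩

lemma BM.comp {a : Eu n → ℝ} {A : ℝ} (ha : BM a A) {G : ℝ → ℝ} (hG : Continuous G) :
    ∃ B, BM (fun y => G (a y)) B := by
  obtain ⟨B, hB⟩ := (isCompact_Icc (a := -A) (b := A)).exists_bound_of_continuousOn hG.continuousOn
  exact ⟨B, hG.measurable.comp ha.m, fun x => hB _ (abs_le.1 (ha.b x))⟩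

lemma LH.supp {a χ : Eu n → ℝ} (hχ : ContDiff ℝ 1 χ) (hs : tsupport χ ⊆ Ω)
    (ha : ∀ x ∈ Ω, LH a x) (x : Eu n) : LH (fun y => a y * χ y) x := by
  by_cases hx : x ∈ tsupport χ
  · exact (ha x (hs hx)).mul (LH.of_cd hχ.contDiffAt)
  · refine (LH.const 0 x).congr ?_
    filter_upwards [notMem_tsupport_iff_eventuallyEq.1 hx] with y hy
    simp [hy]

/-- regularity data -/
structure Dat (Ω : Set (Eu n)) (u : Eu n → Eu n) (ρ Θ : Eu n → ℝ) (G : ℝ → ℝ) (v : Eu n → ℝ)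
    (M : ℝ) : Prop where
  hΩ : IsOpen Ω
  hu : ∀ x ∈ Ω, ContDiffAt ℝ 1 u x
  hρ : ContDiff ℝ 2 ρ
  hρz : ∀ x, 1 < ‖x‖ → ρ x = 0
  h1 : ∫ x, ρ x = 1
  hΘ : ContDiff ℝ 2 Θ
  hΘz : ∀ x, 1 < ‖x‖ → Θ x = 0
  hid : ∀ x, 2 ^ n * ρ ((2:ℝ) • x) - ρ x = lapl Θ x
  hG : ContDiff ℝ 1 G
  hv : BM v M
  hw : Wk Ω u v (fun x => G (v x))

variable {ρ Θ v : Eu n → ℝ} {G : ℝ → ℝ} {M : ℝ}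

lemma Dat.kρ (D : Dat Ω u ρ Θ G v M) : Ker ρ := ⟨D.hρ.of_le (by norm_num), D.hρz⟩
lemma Dat.kΘ (D : Dat Ω u ρ Θ G v M) : Ker Θ := ⟨D.hΘ.of_le (by norm_num), D.hΘz⟩
lemma Dat.kp (D : Dat Ω u ρ Θ G v M) (i : Fin n) : Ker (pd i Θ) :=
  ⟨pd_contDiff (k := 2) (m := 1) D.hΘ (by norm_num) i, pd_z D.hΘz i⟩
lemma Dat.S2 (D : Dat Ω u ρ Θ G v M) (m : ℕ) : ContDiff ℝ 2 (cv v (sc ρ m)) :=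
  cv_cd (m := 2) D.hv (sc_cd (m := 2) D.hρ m) (D.kρ.sc m).cs

lemma Dat.q0 (D : Dat Ω u ρ Θ G v M) {χ : Eu n → ℝ} {x0 : Eu n} {R : ℝ} {m : ℕ}
    (C : Cut Ω x0 χ R m) :
    ∃ B, BM (fun y => χ y * G (v y) + dvg u y * χ y * v y) B := by
  obtain ⟨B1, h1⟩ := BM.of_cont C.cd.continuous C.cs
  obtain ⟨B2, h2⟩ := D.hv.comp D.hG.continuous
  obtain ⟨B3, h3⟩ := BM.of_cont (cont_mul_supp D.hΩ (dvg_contOn D.hu) C.cd.continuous C.ts)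
    C.cs.mul_left
  exact ⟨_, (h1.mul h2).add (h3.mul D.hv)⟩

lemma Dat.q1 (D : Dat Ω u ρ Θ G v M) {χ : Eu n → ℝ} {x0 : Eu n} {R : ℝ} {m : ℕ}
    (C : Cut Ω x0 χ R m) :
    ∃ B : Fin n → ℝ, ∀ i, BM (fun y => u y i * χ y * v y) (B i) := by
  have : ∀ i, ∃ B, BM (fun y => u y i * χ y * v y) B := by
    intro i
    obtain ⟨B3, h3⟩ := BM.of_cont (cont_mul_supp D.hΩ (comp_contOn D.hu i) C.cd.continuous C.ts)
      C.cs.mul_left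
    exact ⟨_, h3.mul D.hv⟩
  choose B hB using this
  exact ⟨B, hB⟩

lemma Dat.lim (D : Dat Ω u ρ Θ G v M) {χ : Eu n → ℝ} {x0 : Eu n} {R : ℝ} {m : ℕ}
    (C : Cut Ω x0 χ R m) {x : Eu n} (hx : x ∈ Metric.ball x0 R) :
    Tendsto (fun N => cv v (sc ρ N) x) atTop (𝓝 (cv v (sc ρ m) x +
      (SS (c0 m) (fun y => χ y * G (v y) + dvg u y * χ y * v y) Θ x
      + ∑ i, SS (c1 m) (fun y => u y i * χ y * v y) (pd i Θ) x))) := by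
  obtain ⟨B0, h0⟩ := D.q0 C
  obtain ⟨B1, h1⟩ := D.q1 C
  obtain ⟨B2, h2⟩ := D.hv.comp D.hG.continuous
  exact tele D.kρ D.hΘ D.hΘz D.hid D.hv h0 h1 fun j hj =>
    id1 D.hΩ D.hu D.hv h2 D.hw D.hΘ D.hΘz (C.hb x hx) (C.h1 x hx) C.hm hj

/-- normalization -/
def Nrm (Ω : Set (Eu n)) (ρ v : Eu n → ℝ) : Prop :=
  ∀ x ∈ Ω, Tendsto (fun N => cv v (sc ρ N) x) atTop (𝓝 (v x))

lemma Dat.rep1 (D : Dat Ω u ρ Θ G v M) (hN : Nrm Ω ρ v) {χ : Eu n → ℝ} {x0 : Eu n} {R : ℝ} {m : ℕ}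
    (C : Cut Ω x0 χ R m) : v =ᶠ[𝓝 x0] fun x => cv v (sc ρ m) x +
      (SS (c0 m) (fun y => χ y * G (v y) + dvg u y * χ y * v y) Θ x
      + ∑ i, SS (c1 m) (fun y => u y i * χ y * v y) (pd i Θ) x) := by
  filter_upwards [Metric.ball_mem_nhds x0 C.hR] with x hx
  exact tendsto_nhds_unique (hN x (C.hb x hx (Metric.mem_closedBall_self C.hR.le))) (D.lim C hx)

lemma Dat.r1 (D : Dat Ω u ρ Θ G v M) (hN : Nrm Ω ρ v) {x : Eu n} (hx : x ∈ Ω) : LH v x := by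
  obtain ⟨χ, R, m, C⟩ := exists_cut D.hΩ hx
  obtain ⟨B0, h0⟩ := D.q0 C
  obtain ⟨B1, h1⟩ := D.q1 C
  refine LH.congr ?_ (D.rep1 hN C)
  refine (LH.of_cd ((D.S2 m).of_le (by norm_num)).contDiffAt).add (LH.add ?_ (LH.sum _ fun i => ?_))
  · exact LH.of_global (SS_hol h0 D.kΘ (c0_bd' m)) x
  · exact LH.of_global (SS_hol (h1 i) (D.kp i) (c1_bd m)) x

lemma Dat.r2 (D : Dat Ω u ρ Θ G v M) (hN : Nrm Ω ρ v) {x : Eu n} (hx : x ∈ Ω) :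
    ContDiffAt ℝ 1 v x := by
  obtain ⟨χ, R, m, C⟩ := exists_cut D.hΩ hx
  obtain ⟨B0, h0⟩ := D.q0 C
  obtain ⟨B1, h1⟩ := D.q1 C
  refine ContDiffAt.congr_of_eventuallyEq (ContDiff.contDiffAt ?_) (D.rep1 hN C)
  refine ((D.S2 m).of_le (by norm_num)).add (ContDiff.add (SS_C1 h0 D.kΘ (c0_bd m)).1
    (ContDiff.sum fun i _ => ?_))
  obtain ⟨H, hH0, hH⟩ := LH.global (h1 i).b (C.cs.mul_left.mul_right) (fun z => by
    refine (LH.supp (a := fun y => u y i * v y) C.cd C.ts (fun y hy => ?_) z).congr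
      (Eventually.of_forall fun y => by simp only; ring)
    exact (LH.of_cd (comp_contDiffAt (D.hu y hy) i)).mul (D.r1 hN hy))
  exact SS_C1' (h1 i) (D.kp i) hH0 hH (c1_bd m)

lemma Dat.q2 (D : Dat Ω u ρ Θ G v M) (hv1 : ∀ x ∈ Ω, ContDiffAt ℝ 1 v x)
    {χ : Eu n → ℝ} {x0 : Eu n} {R : ℝ} {m : ℕ} (C : Cut Ω x0 χ R m) :
    ∃ B, BM (fun y => (G (v y) - ∑ i, u y i * pd i v y) * χ y) B := by
  refine BM.of_cont (cont_mul_supp D.hΩ ?_ C.cd.continuous C.ts) C.cs.mul_left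
  refine ContinuousOn.sub ?_ (grad_contOn D.hu hv1)
  exact D.hG.continuous.comp_continuousOn
    (fun y hy => (hv1 y hy).continuousAt.continuousWithinAt)

lemma Dat.rep2 (D : Dat Ω u ρ Θ G v M) (hN : Nrm Ω ρ v) {χ : Eu n → ℝ} {x0 : Eu n} {R : ℝ} {m : ℕ}
    (C : Cut Ω x0 χ R m) (i : Fin n) : pd i v =ᶠ[𝓝 x0] fun x => pd i (cv v (sc ρ m)) x +
      SS (fun j => c0 m j * 2 ^ j) (fun y => (G (v y) - ∑ i, u y i * pd i v y) * χ y)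
        (pd i Θ) x := by
  have hv1 : ∀ x ∈ Ω, ContDiffAt ℝ 1 v x := fun x hx => D.r2 hN hx
  obtain ⟨B0, h0⟩ := D.q2 hv1 C
  obtain ⟨B2, h2⟩ := D.hv.comp D.hG.continuous
  have hz : BM (fun _ : Eu n => (0:ℝ)) 0 := ⟨measurable_const, fun x => by simp⟩
  have e : v =ᶠ[𝓝 x0] fun x => cv v (sc ρ m) x +
      SS (c0 m) (fun y => (G (v y) - ∑ i, u y i * pd i v y) * χ y) Θ x := by
    filter_upwards [Metric.ball_mem_nhds x0 C.hR] with x hx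
    have t := tele (q := fun _ _ => 0) (x := x) D.kρ D.hΘ D.hΘz D.hid D.hv h0 (fun _ => hz)
      fun j hj => by
        have := id2 D.hΩ D.hu D.hv h2 D.hw hv1 D.hΘ D.hΘz (C.hb x hx) (C.h1 x hx) C.hm hj
        rw [this]
        simp [cv]
    have := tendsto_nhds_unique (hN x (C.hb x hx (Metric.mem_closedBall_self C.hR.le))) t
    rw [this]
    simp [SS, cv]
  filter_upwards [e.fderiv (𝕜 := ℝ)] with x hx
  have s := SS_C1 h0 D.kΘ (c0_bd m)
  rw [← s.2 i x]
  have := pd_add (i := i) (x := x) ((D.S2 m).differentiable (by norm_num) x)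
    (s.1.differentiable (by norm_num) x)
  rw [← this, pd, hx]
  rfl

lemma Dat.r4 (D : Dat Ω u ρ Θ G v M) (hN : Nrm Ω ρ v) {x : Eu n} (hx : x ∈ Ω) (i : Fin n) :
    ContDiffAt ℝ 1 (pd i v) x := by
  have hv1 : ∀ x ∈ Ω, ContDiffAt ℝ 1 v x := fun x hx => D.r2 hN hx
  have r3 : ∀ i, ∀ x ∈ Ω, LH (pd i v) x := by
    intro i x hx
    obtain ⟨χ, R, m, C⟩ := exists_cut D.hΩ hx
    obtain ⟨B0, h0⟩ := D.q2 hv1 C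
    refine LH.congr ?_ (D.rep2 hN C i)
    refine (LH.of_cd (pd_contDiff (k := 2) (m := 1) (D.S2 m) (by norm_num) i).contDiffAt).add ?_
    exact LH.of_global (SS_hol h0 (D.kp i) (c0_bd2 m)) x
  obtain ⟨χ, R, m, C⟩ := exists_cut D.hΩ hx
  obtain ⟨B0, h0⟩ := D.q2 hv1 C
  refine ContDiffAt.congr_of_eventuallyEq (ContDiff.contDiffAt ?_) (D.rep2 hN C i)
  refine (pd_contDiff (k := 2) (m := 1) (D.S2 m) (by norm_num) i).add ?_
  obtain ⟨H, hH0, hH⟩ := LH.global h0.b (C.cs.mul_left)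
    (LH.supp C.cd C.ts (fun y hy => LH.sub (LH.comp D.hG (D.r1 hN hy))
      (LH.sum _ fun i => (LH.of_cd (comp_contDiffAt (D.hu y hy) i)).mul (r3 i y hy))))
  exact SS_C1' h0 (D.kp i) hH0 hH (c0_bd2 m)

lemma Dat.r5 (D : Dat Ω u ρ Θ G v M) (hN : Nrm Ω ρ v) {x : Eu n} (hx : x ∈ Ω) :
    ContDiffAt ℝ 2 v x := by
  refine (contDiffAt_succ_iff_hasFDerivAt (n := 1)).2 ⟨fderiv ℝ v, ⟨Ω, D.hΩ.mem_nhds hx,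
    fun y hy => ((D.r2 hN hy).differentiableAt (by norm_num)).hasFDerivAt⟩, ?_⟩
  have : fderiv ℝ v = fun y => ∑ i, pd i v y • (EuclideanSpace.proj (𝕜 := ℝ) i : Eu n →L[ℝ] ℝ) := by
    ext y w
    rw [fderiv_apply_eq]
    simp [mul_comm]
  rw [this]
  exact ContDiffAt.sum fun i _ => (D.r4 hN hx i).smul contDiffAt_const

lemma Dat.r6 (D : Dat Ω u ρ Θ G v M) (hN : Nrm Ω ρ v) {x : Eu n} (hx : x ∈ Ω) :
    - lapl v x + ∑ i, u x i * pd i v x = G (v x) := by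
  have h2 : ∀ x ∈ Ω, ContDiffAt ℝ 2 v x := fun x hx => D.r5 hN hx
  have hv1 : ∀ x ∈ Ω, ContDiffAt ℝ 1 v x := fun x hx => D.r2 hN hx
  have hc1 : ContinuousOn (fun x => - lapl v x + ∑ i, u x i * pd i v x) Ω :=
    (lapl_contOn h2).neg.add (grad_contOn D.hu hv1)
  have hc2 : ContinuousOn (fun x => G (v x)) Ω := D.hG.continuous.comp_continuousOn
    (fun y hy => (hv1 y hy).continuousAt.continuousWithinAt)
  have hae := D.hΩ.ae_eq_zero_of_integral_contDiff_smul_eq_zero (μ := volume)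
    ((hc1.sub hc2).locallyIntegrableOn D.hΩ.measurableSet) (fun ζ h1 h3 h4 => by
      have ht : Tst Ω ζ := ⟨contDiff_infty.1 h1 2, h3, h4⟩
      have e1 := wk_classical D.hΩ D.hu h2 ζ ht
      have e2 := D.hw ζ ht
      have c1 := ht.mulc D.hΩ hc1
      have c2 := ht.mulc D.hΩ hc2
      have i1 := c1.1.integrable_of_hasCompactSupport c1.2 (μ := volume)
      have i2 := c2.1.integrable_of_hasCompactSupport c2.2 (μ := volume)
      rw [e1] at e2
      have e3 := sub_eq_zero.2 e2
      rw [← integral_sub i1 i2] at e3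
      rw [← e3]
      refine integral_congr_ae (ae_of_all _ fun y => ?_)
      simp only [smul_eq_mul, Pi.sub_apply]; ring)
  have := Measure.eqOn_open_of_ae_eq (μ := volume) (U := Ω)
    (f := fun x => - lapl v x + ∑ i, u x i * pd i v x) (g := fun x => G (v x))
    ((ae_restrict_iff' D.hΩ.measurableSet).2 (by
      filter_upwards [hae] with y hy h; exact sub_eq_zero.1 (hy h))) D.hΩ hc1 hc2
  exact this hx

lemma Dat.normalize (D : Dat Ω u ρ Θ G v M) (h0 : ∀ x, x ∉ Ω → v x = 0) :
    ∃ w B, Dat Ω u ρ Θ G w B ∧ Nrm Ω ρ w ∧ w =ᵐ[volume] v ∧ ∀ x, x ∉ Ω → w x = 0 := by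
  classical
  have hl : ∀ x ∈ Ω, ∃ l, Tendsto (fun N => cv v (sc ρ N) x) atTop (𝓝 l) := by
    intro x hx
    obtain ⟨χ, R, m, C⟩ := exists_cut D.hΩ hx
    exact ⟨_, D.lim C (Metric.mem_ball_self C.hR)⟩
  let w : Eu n → ℝ := fun x => if h : x ∈ Ω then (hl x h).choose else 0
  have hw0 : ∀ x, x ∉ Ω → w x = 0 := fun x hx => by simp [w, hx]
  have hwl : ∀ x ∈ Ω, Tendsto (fun N => cv v (sc ρ N) x) atTop (𝓝 (w x)) := fun x hx => by
    simp only [w, hx, dif_pos]; exact (hl x hx).choose_spec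
  have hwv : w =ᵐ[volume] v := by
    filter_upwards [leb D.hv D.hρ.continuous D.hρz D.h1] with x hx
    by_cases h : x ∈ Ω
    · exact tendsto_nhds_unique (hwl x h) hx
    · rw [hw0 x h, h0 x h]
  have hm : Measurable w := by
    refine measurable_of_tendsto_metrizable (f := fun N => Ω.indicator (cv v (sc ρ N)))
      (fun N => ?_) (tendsto_pi_nhds.2 fun x => ?_)
    · exact (cv_cd (m := 1) D.hv (D.kρ.sc N).cd (D.kρ.sc N).cs).continuous.measurable.indicator
        D.hΩ.measurableSet
    · by_cases h : x ∈ Ω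
      · simpa [h] using hwl x h
      · simp [h, hw0 x h]
  have hb : BM w (M * ∫ y, |ρ y|) := by
    refine ⟨hm, fun x => ?_⟩
    by_cases h : x ∈ Ω
    · exact le_of_tendsto (hwl x h).abs (Eventually.of_forall fun N =>
        cv_sc_bd D.hv D.hρ.continuous D.hρz N x)
    · rw [hw0 x h, abs_zero]
      exact mul_nonneg D.hv.nonneg (integral_nonneg fun y => abs_nonneg _)
  have hcv : ∀ k x, cv w k x = cv v k x := by
    intro k x
    refine integral_congr_ae ?_
    filter_upwards [hwv] with y hy
    rw [hy]
  refine ⟨w, _, { D with hv := hb, hw := fun ζ hζ => ?_ }, fun x hx => ?_, hwv, hw0⟩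
  · have := D.hw ζ hζ
    refine Eq.trans (integral_congr_ae ?_) (this.trans (integral_congr_ae ?_))
    · filter_upwards [hwv] with y hy
      rw [hy]
    · filter_upwards [hwv] with y hy
      rw [hy]
  · simpa only [hcv] using hwl x hx

end

section
variable {n : ℕ} {Ω : Set (Eu n)} {u : Eu n → Eu n}

lemma reg (hn : 0 < n) (hΩ : IsOpen Ω) (hu : ∀ x ∈ Ω, ContDiffAt ℝ 1 u x) {G : ℝ → ℝ}
    (hG : ContDiff ℝ 1 G) {v w : Eu n → ℝ} {M : ℝ} (hm : Measurable v)
    (h0 : ∀ x ∈ Ω, 0 ≤ v x) (hvw : ∀ x ∈ Ω, v x ≤ w x) (hwM : ∀ x ∈ Ω, w x ≤ M)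
    (hwc : ContinuousOn w Ω) (hoff : ∀ x ∉ Ω, v x = 0) (hw : Wk Ω u v (fun x => G (v x))) :
    ∃ V : Eu n → ℝ, (∀ x ∈ Ω, ContDiffAt ℝ 2 V x) ∧ (∀ x ∈ Ω, 0 ≤ V x) ∧ (∀ x ∈ Ω, V x ≤ w x) ∧
      (∀ x ∉ Ω, V x = 0) ∧ ∀ x ∈ Ω, - lapl V x + ∑ i, u x i * pd i V x = G (V x) := by
  obtain ⟨ρ, Θ, k1, k2, k3, k4, k5, k6⟩ := exists_kernel hn
  have hb : BM v |M| := by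
    refine ⟨hm, fun x => ?_⟩
    by_cases hx : x ∈ Ω
    · rw [abs_of_nonneg (h0 x hx)]
      exact ((hvw x hx).trans (hwM x hx)).trans (le_abs_self _)
    · rw [hoff x hx, abs_zero]; exact abs_nonneg _
  have D : Dat Ω u ρ Θ G v |M| := ⟨hΩ, hu, k1, fun x hx => k3 x hx.le, k5, k2,
    fun x hx => k4 x hx.le, k6, hG, hb, hw⟩
  obtain ⟨V, B, DV, hN, hae, hV0⟩ := D.normalize hoff
  have hVc : ContinuousOn V Ω := fun x hx => (DV.r5 hN hx).continuousAt.continuousWithinAt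
  refine ⟨V, fun x hx => DV.r5 hN hx, ?_, ?_, hV0, fun x hx => DV.r6 hN hx⟩
  · have := Measure.eqOn_open_of_ae_eq (μ := volume) (U := Ω) (f := fun x => max (V x) 0) (g := V)
      ((ae_restrict_iff' hΩ.measurableSet).2 (by
        filter_upwards [hae] with y hy h
        rw [hy]; exact max_eq_left (h0 y h))) hΩ (hVc.sup continuousOn_const) hVc
    intro x hx
    rw [← this hx]; exact le_max_right _ _
  · have := Measure.eqOn_open_of_ae_eq (μ := volume) (U := Ω) (f := fun x => min (V x) (w x)) (g := V)
      ((ae_restrict_iff' hΩ.measurableSet).2 (by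
        filter_upwards [hae] with y hy h
        rw [hy]; exact min_eq_left (hvw y h))) hΩ (hVc.inf hwc) hVc
    intro x hx
    rw [← this hx]; exact min_le_right _ _

lemma lapl_add_at {a b : Eu n → ℝ} {x : Eu n} (ha : ContDiffAt ℝ 2 a x) (hb : ContDiffAt ℝ 2 b x) :
    lapl (a + b) x = lapl a x + lapl b x := by
  rw [lapl_eq, lapl_eq, lapl_eq, ← Finset.sum_add_distrib]
  refine Finset.sum_congr rfl fun i _ => ?_
  have e : pd i (a + b) =ᶠ[𝓝 x] pd i a + pd i b := by
    filter_upwards [ha.eventually (by simp), hb.eventually (by simp)] with y h1 h2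
    exact pd_add (h1.differentiableAt (by norm_num)) (h2.differentiableAt (by norm_num)) i
  have e2 : pd i (pd i (a + b)) x = pd i (pd i a + pd i b) x := by
    unfold pd at e ⊢
    rw [e.fderiv_eq]
  rw [e2, pd_add]
  · exact (pd_contDiffAt (k := 2) (m := 1) ha (by norm_num) i).differentiableAt (by norm_num)
  · exact (pd_contDiffAt (k := 2) (m := 1) hb (by norm_num) i).differentiableAt (by norm_num)

lemma min_pd {f : Eu n → ℝ} {x : Eu n} (h : IsLocalMin f x) (i : Fin n) : pd i f x = 0 := by
  simp [pd, h.fderiv_eq_zero]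

lemma min_lapl {f : Eu n → ℝ} {x : Eu n} (hf : ContDiffAt ℝ 2 f x) (h : IsLocalMin f x) :
    0 ≤ lapl f x := by
  rw [lapl_eq]
  refine Finset.sum_nonneg fun i _ => ?_
  have hline : ∀ (t : ℝ), HasDerivAt (fun t : ℝ => x + t • (ei i : Eu n)) (ei i) t := fun t => by
    simpa using ((hasDerivAt_id t).smul_const (ei i : Eu n)).const_add x
  have hc : Tendsto (fun t : ℝ => x + t • (ei i : Eu n)) (𝓝 0) (𝓝 x) :=
    (hline 0).continuousAt.tendsto.trans (by simp)
  set k : ℝ → ℝ := fun t => f (x + t • ei i) with hk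
  have d1 : deriv k =ᶠ[𝓝 0] fun t => pd i f (x + t • ei i) := by
    filter_upwards [hc.eventually (hf.eventually (by simp))] with t ht
    exact ((ht.differentiableAt (by norm_num)).hasFDerivAt.comp_hasDerivAt t (hline t)).deriv
  have d2 : deriv (deriv k) 0 = pd i (pd i f) x := by
    rw [d1.deriv_eq]
    have hp := (pd_contDiffAt (k := 2) (m := 1) hf (by norm_num) i).differentiableAt (by norm_num)
    have hp' : HasFDerivAt (pd i f) (fderiv ℝ (pd i f) x) (x + (0:ℝ) • ei i) := by
      simpa using hp.hasFDerivAt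
    exact (hp'.comp_hasDerivAt (0:ℝ) (hline 0)).deriv
  rw [← d2]
  by_contra! hneg
  have hmin : IsLocalMin k 0 := by
    have := hc.eventually h
    filter_upwards [this] with t ht
    simpa [hk] using ht
  have hkc : ContinuousAt k 0 := by
    have : ContinuousAt f (x + (0:ℝ) • ei i) := by simpa using hf.continuousAt
    exact ContinuousAt.comp (f := fun t : ℝ => x + t • (ei i : Eu n)) this (hline 0).continuousAt
  have hmax := isLocalMax_of_deriv_deriv_neg hneg hmin.deriv_eq_zero hkc
  have hconst : k =ᶠ[𝓝 0] fun _ => k 0 := by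
    filter_upwards [hmin, hmax] with t h1 h2
    exact le_antisymm h2 h1
  have : deriv (deriv k) 0 = 0 := by
    have e := hconst.deriv
    rw [e.deriv_eq]; simp
  linarith

lemma wk_ind (hΩ : IsOpen Ω) (hu : ∀ x ∈ Ω, ContDiffAt ℝ 1 u x) {w : Eu n → ℝ}
    (hw : ∀ x ∈ Ω, ContDiffAt ℝ 2 w x) :
    Wk Ω u (Ω.indicator w) (fun x => - lapl w x + ∑ i, u x i * pd i w x) := by
  intro ζ h
  rw [← wk_classical hΩ hu hw ζ h]
  refine integral_congr_ae (ae_of_all _ fun x => ?_)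
  by_cases hx : x ∈ Ω
  · simp [hx]
  · have : adj u ζ x = 0 := image_eq_zero_of_notMem_tsupport fun h' => hx (h.ts (adj_supp h'))
    simp [this]
end

/-- If `φ_λ` is a minimal nonnegative classical solution and `ψ` is a
positive principal eigenfunction of the linearized operator
`Mψ = -Δψ + ⟨u, ∇ψ⟩ - λ g'(φ_λ) ψ` with eigenvalue `κ`, then `κ ≥ 0`. -/
theorem minimal_solution_linearization_nonneg_eigenvalue {n : ℕ}
    (Ω : Set (EuclideanSpace ℝ (Fin n)))
    (hΩo : IsOpen Ω) (hΩc : IsConnected Ω) (hΩb : Bornology.IsBounded Ω)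
    (u : EuclideanSpace ℝ (Fin n) → EuclideanSpace ℝ (Fin n))
    (hu : ContDiffOn ℝ 1 u (closure Ω))
    (g : ℝ → ℝ) (hg : ContDiff ℝ 2 g) (hg0 : 0 < g 0)
    (hgmono : StrictMonoOn g (Ici 0)) (hgconv : ConvexOn ℝ (Ici 0) g)
    (lam : ℝ) (hlam : 0 < lam)
    (φ : EuclideanSpace ℝ (Fin n) → ℝ) (hφ : IsMinimalSol Ω u g lam φ)
    (κ : ℝ) (ψ : EuclideanSpace ℝ (Fin n) → ℝ)
    (hψreg : ∀ x ∈ Ω, ContDiffAt ℝ 2 ψ x)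
    (hψcont : ContinuousOn ψ (closure Ω))
    (hψpos : ∀ x ∈ Ω, 0 < ψ x)
    (hψbd : ∀ x ∈ frontier Ω, ψ x = 0)
    (hψeig : ∀ x ∈ Ω,
      -lapl ψ x + ⟪u x, gradient ψ x⟫ - lam * deriv g (φ x) * ψ x = κ * ψ x) :
    0 ≤ κ := by
  by_contra! hκ
  obtain ⟨⟨⟨hφ2, hφc, hφe, hφb⟩, hφ0⟩, hφmin⟩ := hφ
  obtain ⟨z0, hz0⟩ := hΩc.nonempty
  have hgm : MonotoneOn g (Ici 0) := hgmono.monotoneOn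
  rcases Nat.eq_zero_or_pos n with rfl | hn
  · have h1 := hφe z0 hz0
    have h2 : g 0 ≤ g (φ z0) := hgm (mem_Ici.2 le_rfl) (mem_Ici.2 (hφ0 z0 hz0)) (hφ0 z0 hz0)
    have h3 : ⟪u z0, gradient φ z0⟫ = 0 := by rw [inner_gradient]; simp
    rw [h3] at h1
    simp only [lapl, Finset.univ_eq_empty, Finset.sum_empty, neg_zero, add_zero] at h1
    have : 0 < lam * g (φ z0) := mul_pos hlam (hg0.trans_le h2)
    linarith
  have hK : IsCompact (closure Ω) := hΩb.isCompact_closure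
  have hu' : ∀ x ∈ Ω, ContDiffAt ℝ 1 u x := fun x hx =>
    hu.contDiffAt (mem_of_superset (hΩo.mem_nhds hx) subset_closure)
  have hcl : ∀ x ∈ closure Ω, x ∉ Ω → x ∈ frontier Ω := fun x hx hn => by
    rw [hΩo.frontier_eq]; exact ⟨hx, hn⟩
  have hdg : Continuous (deriv g) := hg.continuous_deriv (by norm_num)
  obtain ⟨A, hA⟩ := hK.exists_bound_of_continuousOn hφc
  obtain ⟨B, hB⟩ := hK.exists_bound_of_continuousOn hψcont
  obtain ⟨E, hE⟩ := hK.exists_bound_of_continuousOn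
    (((continuousOn_const (c := lam)).mul (hdg.comp_continuousOn hφc)).add
      (continuousOn_const (c := κ)) |>.mul hψcont)
  have huc : UniformContinuousOn (deriv g) (Icc 0 A) :=
    isCompact_Icc.uniformContinuousOn_of_continuous hdg.continuousOn
  obtain ⟨δ, hδ, hδ'⟩ := Metric.uniformContinuousOn_iff.1 huc (-κ / lam) (by
    exact div_pos (by linarith) hlam)
  obtain ⟨ε, hε0, hεE, hεB⟩ : ∃ ε : ℝ, 0 < ε ∧ ε * E < lam * g 0 ∧ ε * B < δ := by
    have t1 : ∀ᶠ ε : ℝ in 𝓝[>] 0, ε * E < lam * g 0 := by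
      refine nhdsWithin_le_nhds ?_
      refine ContinuousAt.eventually_lt (f := fun ε : ℝ => ε * E) (by fun_prop) continuousAt_const ?_
      simpa using mul_pos hlam hg0
    have t2 : ∀ᶠ ε : ℝ in 𝓝[>] 0, ε * B < δ := by
      refine nhdsWithin_le_nhds ?_
      refine ContinuousAt.eventually_lt (f := fun ε : ℝ => ε * B) (by fun_prop) continuousAt_const ?_
      simpa using hδ
    obtain ⟨ε, h1, h2, h3⟩ := ((eventually_mem_nhdsWithin).and (t1.and t2)).exists
    exact ⟨ε, h1, h2, h3⟩
  set w : EuclideanSpace ℝ (Fin n) → ℝ := φ + (-ε) • ψ with hw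
  have hwx : ∀ x, w x = φ x - ε * ψ x := fun x => by simp [hw]; ring
  have hw2 : ∀ x ∈ Ω, ContDiffAt ℝ 2 w x := fun x hx =>
    (hφ2 x hx).add (contDiffAt_const.smul (hψreg x hx))
  have hwc : ContinuousOn w (closure Ω) := hφc.add (continuousOn_const.smul hψcont)
  have hwb : ∀ x ∈ frontier Ω, w x = 0 := fun x hx => by rw [hwx, hφb x hx, hψbd x hx]; simp
  have hLw : ∀ x ∈ Ω, - lapl w x + ∑ i, u x i * pd i w x =
      lam * g (φ x) - ε * ((lam * deriv g (φ x) + κ) * ψ x) := by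
    intro x hx
    have e1 := hφe x hx
    have e2 := hψeig x hx
    rw [inner_gradient] at e1 e2
    have hs : ContDiffAt ℝ 2 ((-ε) • ψ) x := contDiffAt_const.smul (hψreg x hx)
    rw [hw, lapl_add_at (hφ2 x hx) hs, lapl_smul]
    have e3 : ∀ i, u x i * pd i (φ + (-ε) • ψ) x
        = u x i * pd i φ x + (-ε) * (u x i * pd i ψ x) := by
      intro i
      rw [pd_add ((hφ2 x hx).differentiableAt (by norm_num))
        (((hψreg x hx).differentiableAt (by norm_num)).const_smul _), pd_smul]
      ring
    simp_rw [e3]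
    rw [Finset.sum_add_distrib, ← Finset.mul_sum]
    have e4 : ∑ i, u x i * pd i ψ x = κ * ψ x + lam * deriv g (φ x) * ψ x + lapl ψ x := by linarith
    rw [e4]
    linear_combination e1
  have hpos : ∀ x ∈ Ω, 0 < - lapl w x + ∑ i, u x i * pd i w x := by
    intro x hx
    rw [hLw x hx]
    have h2 : g 0 ≤ g (φ x) := hgm (mem_Ici.2 le_rfl) (mem_Ici.2 (hφ0 x hx)) (hφ0 x hx)
    have h3 := hE x (subset_closure hx)
    have h4 : ε * ((lam * deriv g (φ x) + κ) * ψ x) ≤ ε * E :=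
      mul_le_mul_of_nonneg_left ((le_abs_self _).trans h3) hε0.le
    have h5 := mul_le_mul_of_nonneg_left h2 hlam.le
    linarith
  have hw0 : ∀ x ∈ Ω, 0 ≤ w x := by
    obtain ⟨x1, hx1, hmin⟩ := hK.exists_isMinOn ⟨z0, subset_closure hz0⟩ hwc
    intro x hx
    refine le_trans ?_ (hmin (subset_closure hx))
    by_contra! hneg
    have hx1Ω : x1 ∈ Ω := by
      by_contra hn
      rw [hwb x1 (hcl x1 hx1 hn)] at hneg
      exact lt_irrefl _ hneg
    have hloc : IsLocalMin w x1 := by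
      filter_upwards [hΩo.mem_nhds hx1Ω] with y hy
      exact hmin (subset_closure hy)
    have h1 := min_lapl (hw2 x1 hx1Ω) hloc
    have h2 := hpos x1 hx1Ω
    simp only [min_pd hloc, mul_zero, Finset.sum_const_zero] at h2
    linarith
  have hsuper : ∀ x ∈ Ω, lam * g (w x) ≤ - lapl w x + ∑ i, u x i * pd i w x := by
    intro x hx
    rw [hLw x hx]
    have hψx := hψpos x hx
    have hlt : w x < φ x := by rw [hwx]; nlinarith
    have hφA : φ x ≤ A := (le_abs_self _).trans (hA x (subset_closure hx))
    obtain ⟨ξ, hξ, he⟩ := exists_deriv_eq_slope g hlt hg.continuous.continuousOn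
      (hg.differentiable (by norm_num)).differentiableOn
    have h0 := hw0 x hx
    have hd : φ x - w x = ε * ψ x := by rw [hwx]; ring
    have hψB : ψ x ≤ B := (le_abs_self _).trans (hB x (subset_closure hx))
    have hdist : dist ξ (φ x) < δ := by
      rw [Real.dist_eq, abs_lt]
      have := mul_le_mul_of_nonneg_left hψB hε0.le
      constructor <;> linarith [hξ.1, hξ.2]
    have h1 := hδ' ξ ⟨by linarith [hξ.1], by linarith [hξ.2]⟩ (φ x)
      ⟨hφ0 x hx, hφA⟩ hdist
    rw [Real.dist_eq, abs_lt] at h1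
    have h2 := h1.1
    rw [hd, eq_div_iff (by positivity)] at he
    have h3 : 0 ≤ lam * (deriv g ξ - deriv g (φ x)) - κ := by
      have := mul_lt_mul_of_pos_left h2 hlam
      have h4 : lam * -(-κ / lam) = κ := by field_simp
      rw [h4] at this
      linarith
    have h5 : 0 ≤ ε * ψ x * (lam * (deriv g ξ - deriv g (φ x)) - κ) := by positivity
    have h6 : g (φ x) = g (w x) + deriv g ξ * (ε * ψ x) := by linarith
    rw [h6]
    linarith
  have hcw : ContinuousOn w Ω := hwc.mono subset_closure
  have hmeas : Measurable (Ω.indicator w) := by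
    classical
    have : Measurable (Ω.piecewise w (fun _ => 0)) :=
      hcw.measurable_piecewise continuousOn_const hΩo.measurableSet
    rwa [← Set.piecewise_eq_indicator]
  have hind : ∀ x ∈ Ω, Ω.indicator w x = w x := fun x hx => indicator_of_mem hx w
  have hwA : ∀ x ∈ Ω, w x ≤ A := fun x hx => by
    have h1 : φ x ≤ A := (le_abs_self _).trans (hA x (subset_closure hx))
    have := hψpos x hx
    rw [hwx]; nlinarith
  have hcF : ContinuousOn (fun x => - lapl w x + ∑ i, u x i * pd i w x) Ω :=
    (lapl_contOn hw2).neg.add (grad_contOn hu' fun x hx => (hw2 x hx).of_le (by norm_num))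
  obtain ⟨v, hvm, hv0, hvw, hvoff, hvW⟩ := exists_iter hΩo hΩb hu' hmeas (M := A)
    (fun x hx => by rw [hind x hx]; exact hw0 x hx) (fun x hx => by rw [hind x hx]; exact hwA x hx)
    (hcF.locallyIntegrableOn hΩo.measurableSet) (wk_ind hΩo hu' hw2) (G := fun t => lam * g t)
    (continuous_const.mul hg.continuous)
    (fun a ha b hb hab => mul_le_mul_of_nonneg_left (hgm ha hb hab) hlam.le)
    (mul_pos hlam hg0).le (fun x hx => by rw [hind x hx]; exact hsuper x hx)
  obtain ⟨V, hV2, hV0, hVw, hVoff, hVe⟩ := reg hn hΩo hu' (G := fun t => lam * g t)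
    (contDiff_const.mul (hg.of_le (by norm_num))) hvm hv0
    (fun x hx => by rw [← hind x hx]; exact hvw x hx) hwA hcw hvoff hvW
  have hfr : ∀ x ∈ frontier Ω, x ∉ Ω := fun x hx => by
    rw [hΩo.frontier_eq] at hx; exact hx.2
  have hVc : ContinuousOn V (closure Ω) := by
    intro x hx
    by_cases hxΩ : x ∈ Ω
    · exact (hV2 x hxΩ).continuousAt.continuousWithinAt
    · have hx' := hcl x hx hxΩ
      have h1 : Tendsto w (𝓝[closure Ω] x) (𝓝 0) := by
        have := hwc x hx
        rw [ContinuousWithinAt, hwb x hx'] at this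
        exact this
      rw [ContinuousWithinAt, hVoff x hxΩ]
      refine squeeze_zero' ?_ ?_ h1
      · filter_upwards [self_mem_nhdsWithin] with y hy
        by_cases hyΩ : y ∈ Ω
        · exact hV0 y hyΩ
        · rw [hVoff y hyΩ]
      · filter_upwards [self_mem_nhdsWithin] with y hy
        by_cases hyΩ : y ∈ Ω
        · exact hVw y hyΩ
        · rw [hVoff y hyΩ, hwb y (hcl y hy hyΩ)]
  have hsol : IsNonnegSol Ω u g lam V :=
    ⟨⟨hV2, hVc, fun x hx => by rw [inner_gradient]; exact hVe x hx,
      fun x hx => hVoff x (hfr x hx)⟩, hV0⟩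
  have c1 := hφmin V hsol z0 hz0
  have c2 := hVw z0 hz0
  have c3 := mul_pos hε0 (hψpos z0 hz0)
  rw [hwx] at c2
  linarith
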